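/- arXiv:1603.09131 — 13 statements merged into one kernel-verified Lean document; each statement's English description precedes it below -/
import Mathlib

section
/- Let n ≥ 2 be an integer, c a real constant, and u : ℝ → ℝ a smooth function with u'(t) > 0 and u''(t) > 0 for all t ∈ ℝ. Define v(t) = n·t − (n−1)·log u'(t) − log u''(t). If (n−1)·v'(t)/u'(t) + v''(t)/u''(t) = c for all t ∈ ℝ, then there exist real constants c₁ and c₂ such that u'(t)^n − u'(t)^(n−1)·u''(t) = (c/(n(n+1)))·u'(t)^(n+1) + c₁·u'(t) + c₂ for all t ∈ ℝ. -/
/-- A real function whose derivative vanishes everywhere is constant. -/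
theorem exists_eq_of_hasDerivAt_zero {f : ℝ → ℝ} (hf : ∀ t, HasDerivAt f 0 t) :
    ∃ a, ∀ t, f t = a :=
  ⟨f 0, fun t => is_const_of_deriv_eq_zero (fun x => (hf x).differentiableAt)
    (fun x => (hf x).deriv) t 0⟩

/-- Reduction of the constant scalar curvature equation for a rotationally
symmetric Kähler potential `u(t)` on `ℂⁿ \ {0}` to a first-order ODE:
if `(n-1)·v'/u' + v''/u'' = c` where `v = n·t - (n-1)·log u' - log u''`,
then `u'^n - u'^(n-1)·u'' = (c/(n(n+1)))·u'^(n+1) + c₁·u' + c₂`. -/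
theorem stmt_0 (n : ℕ) (hn : 2 ≤ n) (c : ℝ) (u v : ℝ → ℝ)
    (hu : ContDiff ℝ (⊤ : ℕ∞) u)
    (hu' : ∀ t : ℝ, 0 < deriv u t)
    (hu'' : ∀ t : ℝ, 0 < deriv (deriv u) t)
    (hv : ∀ t : ℝ, v t = (n : ℝ) * t - ((n : ℝ) - 1) * Real.log (deriv u t)
      - Real.log (deriv (deriv u) t))
    (hscal : ∀ t : ℝ, ((n : ℝ) - 1) * deriv v t / deriv u t
      + deriv (deriv v) t / deriv (deriv u) t = c) :
    ∃ c₁ c₂ : ℝ, ∀ t : ℝ,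
      (deriv u t) ^ n - (deriv u t) ^ (n - 1) * deriv (deriv u) t
        = (c / ((n : ℝ) * ((n : ℝ) + 1))) * (deriv u t) ^ (n + 1)
          + c₁ * deriv u t + c₂ := by
  obtain ⟨m, rfl⟩ : ∃ m, n = m + 2 := ⟨n - 2, by omega⟩
  have hφ : ContDiff ℝ (⊤ : ℕ∞) (deriv u) := (contDiff_infty_iff_deriv.1 hu).2
  have hψ : ContDiff ℝ (⊤ : ℕ∞) (deriv (deriv u)) := (contDiff_infty_iff_deriv.1 hφ).2
  have hvs : ContDiff ℝ (⊤ : ℕ∞) v := by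
    rw [funext hv]
    exact ((contDiff_const.mul contDiff_id).sub
      (contDiff_const.mul (hφ.log fun t => (hu' t).ne'))).sub (hψ.log fun t => (hu'' t).ne')
  have hw : ContDiff ℝ (⊤ : ℕ∞) (deriv v) := (contDiff_infty_iff_deriv.1 hvs).2
  have hφd (t : ℝ) : HasDerivAt (deriv u) (deriv (deriv u) t) t :=
    (hφ.differentiable (by simp) t).hasDerivAt
  have hψd (t : ℝ) : HasDerivAt (deriv (deriv u)) (deriv (deriv (deriv u)) t) t :=
    (hψ.differentiable (by simp) t).hasDerivAt
  have hwd (t : ℝ) : HasDerivAt (deriv v) (deriv (deriv v) t) t :=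
    (hw.differentiable (by simp) t).hasDerivAt
  have hv' (t : ℝ) : deriv v t = ((m : ℝ) + 2) - ((m : ℝ) + 1) * (deriv (deriv u) t / deriv u t)
      - deriv (deriv (deriv u)) t / deriv (deriv u) t := by
    rw [funext hv]
    have h := (((hasDerivAt_id t).const_mul ((m + 2 : ℕ) : ℝ)).sub
      (((hφd t).log (hu' t).ne').const_mul (((m + 2 : ℕ) : ℝ) - 1))).sub
      ((hψd t).log (hu'' t).ne')
    refine h.deriv.trans ?_
    push_cast
    ring
  -- First integration: `u'^(n-1) v' - (c/n) u'^n` is constant.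
  obtain ⟨c₁, hc₁⟩ : ∃ c₁ : ℝ, ∀ t,
      deriv u t ^ (m + 1) * deriv v t - c / (m + 2) * deriv u t ^ (m + 2) = c₁ := by
    refine exists_eq_of_hasDerivAt_zero fun t => ?_
    refine HasDerivAt.congr_deriv ((((hφd t).pow (m + 1)).mul (hwd t)).sub
      (((hφd t).pow (m + 2)).const_mul (c / ((m : ℝ) + 2)))) ?_
    have h := hscal t
    have h1 := (hu' t).ne'
    have h2 := (hu'' t).ne'
    simp only [Pi.pow_apply, Nat.add_one_sub_one]
    push_cast at h ⊢
    rw [← h]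
    field_simp
    ring
  -- Second integration: multiply by `u''` and integrate again.
  obtain ⟨c₂, hc₂⟩ : ∃ c₂ : ℝ, ∀ t,
      deriv u t ^ (m + 2) - deriv u t ^ (m + 1) * deriv (deriv u) t
        - c / ((m + 2) * (m + 2 + 1)) * deriv u t ^ (m + 3) - c₁ * deriv u t = c₂ := by
    refine exists_eq_of_hasDerivAt_zero fun t => ?_
    refine HasDerivAt.congr_deriv (((((hφd t).pow (m + 2)).sub (((hφd t).pow (m + 1)).mul (hψd t))).sub
      (((hφd t).pow (m + 3)).const_mul (c / (((m : ℝ) + 2) * (m + 2 + 1))))).sub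
      ((hφd t).const_mul c₁)) ?_
    have h1 := (hu' t).ne'
    have h2 := (hu'' t).ne'
    simp only [Pi.pow_apply, Nat.add_one_sub_one]
    rw [← hc₁ t, hv' t]
    push_cast
    field_simp
    ring
  refine ⟨c₁, c₂, fun t => ?_⟩
  rw [← hc₂ t]
  push_cast
  ring
end

section
/- If c ≤ 0, then F(x) > 0 for every real x > a. -/
/-- For `m ≥ 2`, the graph of `x ↦ x ^ m` lies strictly above its tangent line at `a > 0`
to the right of `a`. -/
lemma pow_gt_tangent {a x : ℝ} (ha : 0 < a) (hx : a < x) (k : ℕ) :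
    a ^ (k + 2) + ((k : ℝ) + 2) * a ^ (k + 1) * (x - a) < x ^ (k + 2) := by
  induction k with
  | zero =>
    have h : 0 < (x - a) ^ 2 := pow_pos (sub_pos.2 hx) 2
    norm_num
    linarith
  | succ k ih =>
    have h := mul_lt_mul_of_pos_left ih (ha.trans hx)
    have h' : 0 ≤ ((k : ℝ) + 2) * a ^ (k + 1) * (x - a) ^ 2 := by positivity
    push_cast
    ring_nf at h h' ⊢
    linarith

/-- If `c ≤ 0` then `F(x) > 0` for every `x > a`, where
`F(x) = -(c/(n(n+1)))·x^(n+1) + xⁿ - c₁·x - c₂` with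
`c₁ = n·a^(n-1) - (c/n)·aⁿ` and `c₂ = (1-n)·aⁿ + (c/(n+1))·a^(n+1)`. -/
theorem stmt_1 (n : ℕ) (hn : 2 ≤ n) (a c : ℝ) (ha : 0 < a) (hc : c ≤ 0)
    (c₁ c₂ : ℝ)
    (hc₁ : c₁ = (n : ℝ) * a ^ (n - 1) - (c / n) * a ^ n)
    (hc₂ : c₂ = (1 - (n : ℝ)) * a ^ n + (c / ((n : ℝ) + 1)) * a ^ (n + 1))
    (F : ℝ → ℝ)
    (hF : ∀ x : ℝ, F x = -(c / ((n : ℝ) * ((n : ℝ) + 1))) * x ^ (n + 1)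
      + x ^ n - c₁ * x - c₂) :
    ∀ x : ℝ, a < x → 0 < F x := by
  intro x hx
  obtain ⟨k, rfl⟩ := Nat.exists_eq_add_of_le' hn
  have hn' := pow_gt_tangent ha hx k
  have hs := pow_gt_tangent ha hx (k + 1)
  have hd : 0 ≤ -c / (((k : ℝ) + 2) * ((k : ℝ) + 3)) :=
    div_nonneg (neg_nonneg.2 hc) (by positivity)
  have hm := mul_nonneg hd (sub_pos.2 hs).le
  have key : F x = (x ^ (k + 2) - (a ^ (k + 2) + ((k : ℝ) + 2) * a ^ (k + 1) * (x - a)))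
      + -c / (((k : ℝ) + 2) * ((k : ℝ) + 3)) * (x ^ (k + 1 + 2)
        - (a ^ (k + 1 + 2) + (((k + 1 : ℕ) : ℝ) + 2) * a ^ (k + 1 + 1) * (x - a))) := by
    rw [hF, hc₁, hc₂, show k + 2 - 1 = k + 1 from rfl]
    push_cast
    have h2 : (k : ℝ) + 2 ≠ 0 := by positivity
    have h3 : (k : ℝ) + 3 ≠ 0 := by positivity
    rw [show (k : ℝ) + 2 + 1 = k + 3 by ring]
    field_simp
    ring
  linarith
end

section
/- If c > 0 and a·c < n(n−1), then F(x) > 0 for every real x with a < x ≤ n(n−1)/c. -/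
/-- A function vanishing at `a` with positive derivative on `(a, b)` is positive on `(a, b]`. -/
lemma pos_of_hasDerivAt_pos {f f' : ℝ → ℝ} {a b : ℝ} (hf : ∀ x, HasDerivAt f (f' x) x)
    (hfa : f a = 0) (hpos : ∀ x, a < x → x < b → 0 < f' x) {x : ℝ} (hax : a < x) (hxb : x ≤ b) :
    0 < f x := by
  have hmono : StrictMonoOn f (Set.Icc a b) := by
    refine strictMonoOn_of_deriv_pos (convex_Icc a b)
      (fun y _ => (hf y).continuousAt.continuousWithinAt) fun y hy => ?_
    rw [interior_Icc] at hy
    rw [(hf y).deriv]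
    exact hpos y hy.1 hy.2
  simpa [hfa] using hmono ⟨le_rfl, hax.le.trans hxb⟩ ⟨hax.le, hxb⟩ hax

/-- If `c > 0` and `a·c < n(n-1)`, then `F(x) > 0` for every
`x` with `a < x ≤ n(n-1)/c`. -/
theorem stmt_2 (n : ℕ) (hn : 2 ≤ n) (a c : ℝ) (ha : 0 < a) (hc : 0 < c)
    (hac : a * c < (n : ℝ) * ((n : ℝ) - 1))
    (c₁ c₂ : ℝ)
    (hc₁ : c₁ = (n : ℝ) * a ^ (n - 1) - (c / n) * a ^ n)
    (hc₂ : c₂ = (1 - (n : ℝ)) * a ^ n + (c / ((n : ℝ) + 1)) * a ^ (n + 1))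
    (F : ℝ → ℝ)
    (hF : ∀ x : ℝ, F x = -(c / ((n : ℝ) * ((n : ℝ) + 1))) * x ^ (n + 1)
      + x ^ n - c₁ * x - c₂) :
    ∀ x : ℝ, a < x → x ≤ (n : ℝ) * ((n : ℝ) - 1) / c → 0 < F x := by
  obtain ⟨m, rfl⟩ := Nat.exists_eq_add_of_le' hn
  have hn0 : ((m + 2 : ℕ) : ℝ) ≠ 0 := by positivity
  have hn1 : ((m + 2 : ℕ) : ℝ) + 1 ≠ 0 := by positivity
  set N : ℝ := ((m + 2 : ℕ) : ℝ) with hN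
  have hm : (m : ℝ) = N - 2 := by rw [hN]; push_cast; ring
  rw [show m + 2 - 1 = m + 1 from rfl] at hc₁
  have hF' : ∀ x, HasDerivAt F (N * x ^ (m + 1) - c / N * x ^ (m + 2) - c₁) x := by
    intro x
    rw [funext hF]
    refine HasDerivAt.congr_deriv (((((hasDerivAt_pow (m + 2 + 1) x).const_mul (-(c / (N * (N + 1))))).add
      (hasDerivAt_pow (m + 2) x)).sub ((hasDerivAt_id x).const_mul c₁)).sub_const c₂) ?_
    simp only [Nat.add_sub_cancel, show m + 2 - 1 = m + 1 from rfl]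
    push_cast
    rw [hm]
    field_simp
    ring
  have hF'' : ∀ x, HasDerivAt (fun x => N * x ^ (m + 1) - c / N * x ^ (m + 2) - c₁)
      (x ^ m * (N * (N - 1) - c * x)) x := by
    intro x
    refine HasDerivAt.congr_deriv ((((hasDerivAt_pow (m + 1) x).const_mul N).sub
      ((hasDerivAt_pow (m + 2) x).const_mul (c / N))).sub_const c₁) ?_
    simp only [Nat.add_sub_cancel, show m + 2 - 1 = m + 1 from rfl]
    push_cast
    rw [hm]
    field_simp
    ring
  have hFa : F a = 0 := by
    rw [hF, hc₁, hc₂]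
    field_simp
    ring
  intro x hax hxb
  refine pos_of_hasDerivAt_pos hF' hFa (fun y hay hyb => ?_) hax hxb
  refine pos_of_hasDerivAt_pos hF'' (by rw [hc₁]; ring) (fun z haz hzb => ?_) hay hyb.le
  have hz : z * c < N * (N - 1) := (lt_div_iff₀ hc).1 hzb
  exact mul_pos (pow_pos (ha.trans haz) m) (by linarith)
end

section
/- Let a > 0 and s > a be real numbers, and let G : [a, s] → ℝ be a twice continuously differentiable function with G(a) = 0, G'(a) = 0, and G(x) > 0 for all x ∈ (a, s]. Then the function x ↦ 1/√(G(x)) is not integrable on the interval (a, s] (equivalently, the improper integral ∫ₐ^s 1/√(G(x)) dx diverges to +∞). -/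
open MeasureTheory

/-- A `C²` function on `[a, s]` with a double zero at `a` is bounded by a multiple of
`(x - a) ^ 2`. -/
theorem exists_abs_le_mul_sq_of_double_zero {a s : ℝ} (has : a ≤ s) {G : ℝ → ℝ}
    (hG : ContDiffOn ℝ 2 G (Set.Icc a s)) (hGa : G a = 0)
    (hG'a : derivWithin G (Set.Icc a s) a = 0) :
    ∃ C, ∀ x ∈ Set.Icc a s, |G x| ≤ C * (x - a) ^ 2 := by
  obtain ⟨C, hC⟩ := exists_taylor_mean_remainder_bound (n := 1) has
    (hG.of_le (by norm_num [one_add_one_eq_two]))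
  refine ⟨C, fun x hx => ?_⟩
  simpa [taylorWithinEval_succ, iteratedDerivWithin_one, hGa, hG'a] using hC x hx

/-- If `G` is `C²` on `[a, s]` with a double zero at `a` and `G > 0` on `(a, s]`,
then `x ↦ 1/√(G x)` is not integrable on `(a, s]`. -/
theorem stmt_3 (a s : ℝ) (ha : 0 < a) (has : a < s) (G : ℝ → ℝ)
    (hG : ContDiffOn ℝ 2 G (Set.Icc a s))
    (hGa : G a = 0)
    (hG'a : derivWithin G (Set.Icc a s) a = 0)
    (hGpos : ∀ x ∈ Set.Ioc a s, 0 < G x) :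
    ¬ IntegrableOn (fun x => 1 / Real.sqrt (G x)) (Set.Ioc a s) := by
  intro hint
  obtain ⟨C, hC⟩ := exists_abs_le_mul_sq_of_double_zero has.le hG hGa hG'a
  have hinv : IntegrableOn (fun x => (x - a)⁻¹) (Set.Ioc a s) := by
    refine (hint.const_mul (Real.sqrt C)).mono' (by fun_prop) ?_
    filter_upwards [ae_restrict_mem measurableSet_Ioc] with x hx
    have hxa : 0 < x - a := sub_pos.2 hx.1
    have hsqrt : 0 < Real.sqrt (G x) := Real.sqrt_pos.2 (hGpos x hx)
    have hle : Real.sqrt (G x) ≤ Real.sqrt C * (x - a) := by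
      rw [← Real.sqrt_sq hxa.le, ← Real.sqrt_mul' _ (sq_nonneg _)]
      exact Real.sqrt_le_sqrt ((le_abs_self _).trans (hC x (Set.Ioc_subset_Icc_self hx)))
    rw [Real.norm_of_nonneg (inv_nonneg.2 hxa.le), mul_one_div, inv_eq_one_div,
      div_le_div_iff₀ hxa hsqrt, one_mul]
    exact hle
  rw [← intervalIntegrable_iff_integrableOn_Ioc_of_le has.le,
    intervalIntegrable_sub_inv_iff] at hinv
  exact hinv.elim has.ne fun h => h Set.left_mem_uIcc
end

section
/- If c < 0, then lim_{y → ∞} y · ∫_y^∞ x^(n−1)/F(x) dx = n(n+1)/(−c). -/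
open MeasureTheory Filter

/-- If `x² g(x) → L` at infinity, then `y · ∫_y^∞ g → L` as `y → ∞`. -/
theorem tendsto_mul_integral_Ici_of_tendsto_sq_mul {g : ℝ → ℝ} {L : ℝ} (hg : Measurable g)
    (h : Tendsto (fun x => x ^ 2 * g x) atTop (nhds L)) :
    Tendsto (fun y : ℝ => y * ∫ x in Set.Ici y, g x) atTop (nhds L) := by
  rw [Metric.tendsto_atTop] at h ⊢
  intro ε hε
  obtain ⟨N, hN⟩ := h (ε / 2) (half_pos hε)
  refine ⟨max N 1, fun y hy => ?_⟩
  have hNy : N ≤ y := (le_max_left _ _).trans hy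
  have hy0 : 0 < y := zero_lt_one.trans_le ((le_max_right _ _).trans hy)
  have hint : IntegrableOn (fun x : ℝ => x ^ (-2 : ℝ)) (Set.Ioi y) :=
    integrableOn_Ioi_rpow_of_lt (by norm_num) hy0
  have hval : ∫ x in Set.Ioi y, x ^ (-2 : ℝ) = y⁻¹ := by
    rw [integral_Ioi_rpow_of_lt (by norm_num) hy0]
    norm_num [Real.rpow_neg_one]
  have hbound : ∀ x ∈ Set.Ioi y, ‖g x - L * x ^ (-2 : ℝ)‖ ≤ ε / 2 * x ^ (-2 : ℝ) := by
    intro x hx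
    have hxy : y < x := hx
    have hx0 : 0 < x := hy0.trans hxy
    have hpow : x ^ (-2 : ℝ) = (x ^ 2)⁻¹ := by
      rw [Real.rpow_neg hx0.le, Real.rpow_two]
    have hdist := (hN x (hNy.trans hxy.le)).le
    rw [Real.dist_eq] at hdist
    have heq : g x - L * (x ^ 2)⁻¹ = (x ^ 2 * g x - L) * (x ^ 2)⁻¹ := by
      field_simp
    rw [hpow, heq, Real.norm_eq_abs, abs_mul, abs_of_pos (inv_pos.2 (pow_pos hx0 2))]
    gcongr
  have hae : ∀ᵐ x ∂volume.restrict (Set.Ioi y),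
      ‖g x - L * x ^ (-2 : ℝ)‖ ≤ ε / 2 * x ^ (-2 : ℝ) :=
    (ae_restrict_iff' measurableSet_Ioi).2 (ae_of_all _ hbound)
  have hdiff : IntegrableOn (fun x => g x - L * x ^ (-2 : ℝ)) (Set.Ioi y) :=
    Integrable.mono' (hint.const_mul (ε / 2)) (by fun_prop) hae
  have hsplit : ∫ x in Set.Ioi y, g x =
      (∫ x in Set.Ioi y, (g x - L * x ^ (-2 : ℝ))) + L * y⁻¹ := by
    rw [← hval, ← integral_const_mul, ← integral_add hdiff (hint.const_mul L)]
    simp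
  have hnorm : ‖∫ x in Set.Ioi y, (g x - L * x ^ (-2 : ℝ))‖ ≤ ε / 2 * y⁻¹ := by
    rw [← hval, ← integral_const_mul]
    exact norm_integral_le_of_norm_le (hint.const_mul _) hae
  rw [integral_Ici_eq_integral_Ioi, hsplit, Real.dist_eq, mul_add,
    show y * (L * y⁻¹) = L by field_simp, add_sub_cancel_right, abs_mul, abs_of_pos hy0]
  calc y * |∫ x in Set.Ioi y, (g x - L * x ^ (-2 : ℝ))|
      ≤ y * (ε / 2 * y⁻¹) := by gcongr; exact hnorm
    _ = ε / 2 := by field_simp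
    _ < ε := half_lt_self hε

/-- If `c < 0`, then `y · ∫_y^∞ x^(n-1)/F(x) dx → n(n+1)/(-c)` as `y → ∞`. -/
theorem stmt_8 (n : ℕ) (hn : 2 ≤ n) (a c : ℝ) (ha : 0 < a) (hc : c < 0)
    (c₁ c₂ : ℝ)
    (hc₁ : c₁ = (n : ℝ) * a ^ (n - 1) - (c / n) * a ^ n)
    (hc₂ : c₂ = (1 - (n : ℝ)) * a ^ n + (c / ((n : ℝ) + 1)) * a ^ (n + 1))
    (F : ℝ → ℝ)
    (hF : ∀ x : ℝ, F x = -(c / ((n : ℝ) * ((n : ℝ) + 1))) * x ^ (n + 1)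
      + x ^ n - c₁ * x - c₂) :
    Tendsto (fun y : ℝ => y * ∫ x in Set.Ici y, x ^ (n - 1) / F x)
      atTop (nhds ((n : ℝ) * ((n : ℝ) + 1) / (-c))) := by
  have hn0 : (0 : ℝ) < n := by exact_mod_cast (by omega : 0 < n)
  have hFm : Measurable F := by
    rw [funext hF]
    fun_prop
  apply tendsto_mul_integral_Ici_of_tendsto_sq_mul (by fun_prop)
  have hinv (m : ℕ) (hm : m ≠ 0) : Tendsto (fun x : ℝ => (x ^ m)⁻¹) atTop (nhds 0) :=
    tendsto_inv_atTop_zero.comp (tendsto_pow_atTop hm)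
  have hlim : Tendsto (fun x : ℝ => -(c / ((n : ℝ) * ((n : ℝ) + 1))) + (x ^ 1)⁻¹
      - c₁ * (x ^ n)⁻¹ - c₂ * (x ^ (n + 1))⁻¹) atTop
      (nhds (-(c / ((n : ℝ) * ((n : ℝ) + 1))) + 0 - c₁ * 0 - c₂ * 0)) :=
    ((tendsto_const_nhds.add (hinv 1 one_ne_zero)).sub
      ((hinv n (by omega)).const_mul c₁)).sub ((hinv (n + 1) (by omega)).const_mul c₂)
  have hne : -(c / ((n : ℝ) * ((n : ℝ) + 1))) + 0 - c₁ * 0 - c₂ * 0 ≠ 0 := by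
    simp only [mul_zero, sub_zero, add_zero, neg_ne_zero]
    exact div_ne_zero hc.ne (by positivity)
  have hval : (n : ℝ) * ((n : ℝ) + 1) / (-c) =
      (-(c / ((n : ℝ) * ((n : ℝ) + 1))) + 0 - c₁ * 0 - c₂ * 0)⁻¹ := by
    simp only [mul_zero, sub_zero, add_zero]
    rw [← neg_div, inv_div]
  rw [hval]
  refine (hlim.inv₀ hne).congr' ?_
  filter_upwards [eventually_gt_atTop 0] with x hx
  have hFx : F x = x ^ (n + 1) * (-(c / ((n : ℝ) * ((n : ℝ) + 1))) + (x ^ 1)⁻¹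
      - c₁ * (x ^ n)⁻¹ - c₂ * (x ^ (n + 1))⁻¹) := by
    rw [hF, pow_succ]
    field_simp
  rw [hFx, ← mul_div_assoc, ← pow_add, show 2 + (n - 1) = n + 1 by omega,
    div_mul_cancel_left₀ (pow_pos hx _).ne']
end

section
/- Suppose c > 0 and a·c < n(n−1). If b > a satisfies F(b) = 0 and F(x) > 0 for all x ∈ (a, b), then F'(b) < 0. -/
/-- If `c > 0`, `a·c < n(n-1)`, and `b > a` is a zero of `F` with `F > 0`
on `(a, b)`, then `F'(b) < 0`. -/
theorem stmt_9 (n : ℕ) (hn : 2 ≤ n) (a c : ℝ) (ha : 0 < a) (hc : 0 < c)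
    (hac : a * c < (n : ℝ) * ((n : ℝ) - 1))
    (c₁ c₂ : ℝ)
    (hc₁ : c₁ = (n : ℝ) * a ^ (n - 1) - (c / n) * a ^ n)
    (hc₂ : c₂ = (1 - (n : ℝ)) * a ^ n + (c / ((n : ℝ) + 1)) * a ^ (n + 1))
    (F : ℝ → ℝ)
    (hF : ∀ x : ℝ, F x = -(c / ((n : ℝ) * ((n : ℝ) + 1))) * x ^ (n + 1)
      + x ^ n - c₁ * x - c₂)
    (b : ℝ) (hb : a < b) (hFb : F b = 0)
    (hFpos : ∀ x ∈ Set.Ioo a b, 0 < F x) :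
    deriv F b < 0 := by
  obtain ⟨m, rfl⟩ := Nat.exists_eq_add_of_le' hn
  push_cast at hc₁ hc₂ hF
  set G : ℝ → ℝ := fun x =>
    -(c / ((m : ℝ) + 2)) * x ^ (m + 2) + ((m : ℝ) + 2) * x ^ (m + 1) - c₁ with hG
  have hF_deriv (x : ℝ) : HasDerivAt F (G x) x := by
    rw [funext hF]
    have h := ((((hasDerivAt_pow (m + 2 + 1) x).const_mul
      (-(c / (((m : ℝ) + 2) * ((m : ℝ) + 2 + 1))))).add
        (hasDerivAt_pow (m + 2) x)).sub ((hasDerivAt_id x).const_mul c₁)).sub_const c₂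
    refine h.congr_deriv ?_
    simp only [hG, Nat.add_sub_cancel, show m + 2 - 1 = m + 1 from rfl]
    push_cast
    field_simp
  have hG_deriv (x : ℝ) :
      HasDerivAt G ((((m : ℝ) + 2) * ((m : ℝ) + 1) - c * x) * x ^ m) x := by
    have h := (((hasDerivAt_pow (m + 2) x).const_mul (-(c / ((m : ℝ) + 2)))).add
      ((hasDerivAt_pow (m + 1) x).const_mul ((m : ℝ) + 2))).sub_const c₁
    refine h.congr_deriv ?_
    simp only [Nat.add_sub_cancel, show m + 2 - 1 = m + 1 from rfl]
    push_cast
    field_simp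
    ring
  have hF_cont : Continuous F := continuous_iff_continuousAt.2 fun x => (hF_deriv x).continuousAt
  have hG_cont : Continuous G := continuous_iff_continuousAt.2 fun x => (hG_deriv x).continuousAt
  have hFa : F a = 0 := by
    rw [hF, hc₁, hc₂]
    field_simp
    ring
  have hGa : G a = 0 := by
    simp only [hG, hc₁]
    ring
  obtain ⟨ξ, ⟨haξ, hξb⟩, hGξ⟩ := exists_hasDerivAt_eq_zero hb hF_cont.continuousOn
    (hFa.trans hFb.symm) fun x _ => hF_deriv x
  obtain ⟨η, ⟨haη, hηξ⟩, hη⟩ := exists_hasDerivAt_eq_zero haξ hG_cont.continuousOn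
    (hGa.trans hGξ.symm) fun x _ => hG_deriv x
  have hη_pos : 0 < η := ha.trans haη
  have hη_root : ((m : ℝ) + 2) * ((m : ℝ) + 1) - c * η = 0 :=
    (mul_eq_zero.1 hη).resolve_right (pow_pos hη_pos m).ne'
  have hG_anti : StrictAntiOn G (Set.Ici η) := by
    refine strictAntiOn_of_deriv_neg (convex_Ici η) hG_cont.continuousOn fun x hx => ?_
    rw [interior_Ici, Set.mem_Ioi] at hx
    rw [(hG_deriv x).deriv]
    have := mul_lt_mul_of_pos_left hx hc
    exact mul_neg_of_neg_of_pos (by linarith) (pow_pos (hη_pos.trans hx) m)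
  rw [(hF_deriv b).deriv, ← hGξ]
  exact hG_anti hηξ.le (hηξ.trans hξb).le hξb
end

section
/- Let n ≥ 2 be an integer and let c be a real number with 0 < c < n(n−1). Set c₁ = n − c/n, c₂ = (1−n) + c/(n+1), and F(x) = −(c/(n(n+1)))·x^(n+1) + xⁿ − c₁·x − c₂. If b > 1 satisfies F(b) = 0, then F'(b) ≠ −b^(n−1). -/
lemma pow_mul_linear_add_one_pos {b : ℝ} (hb : 1 < b) (n : ℕ) :
    0 < b ^ n * ((2 * n + 1) * b - (2 * n + 2)) + 1 := by
  induction n with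
  | zero => norm_num; linarith
  | succ n ih =>
    have hpow : 1 ≤ b ^ (n + 1) := one_le_pow₀ hb.le
    have hstep : 0 < (b - 1) * (2 * b ^ (n + 1) - 1) :=
      mul_pos (by linarith) (by linarith)
    have hmul := mul_pos (zero_lt_one.trans hb) ih
    push_cast
    linear_combination hstep + hmul

/-- The polynomial left after eliminating `c` from `F b = 0` and `F' b = -b ^ (n - 1)`,
written with `n = k + 1`, is positive for `b > 1`. -/
lemma eliminant_pos {b : ℝ} (hb : 1 < b) (k : ℕ) :
    0 < ((k : ℝ) + 1) ^ 2 * b ^ (k + 2) - (k + 2) * (2 * k + 1) * b ^ (k + 1)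
      + (k + 1) * (k + 2) * b ^ k - 1 := by
  induction k with
  | zero =>
    have hsq : 0 < (b - 1) ^ 2 := pow_pos (by linarith) 2
    norm_num
    linarith
  | succ k ih =>
    have hstep := mul_pos (sub_pos.mpr hb) (pow_mul_linear_add_one_pos hb (k + 1))
    have hmul := mul_pos (zero_lt_one.trans hb) ih
    push_cast at hstep ⊢
    linear_combination hstep + hmul

/-- With the normalization `a = 1`: if `0 < c < n(n-1)` and `b > 1` is a
zero of `F`, then `F'(b) ≠ -b^(n-1)` (so `κ = -b^(n-1)/F'(b) = 1` is
impossible). -/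
theorem stmt_10 (n : ℕ) (hn : 2 ≤ n) (c : ℝ) (hc : 0 < c)
    (hc' : c < (n : ℝ) * ((n : ℝ) - 1))
    (c₁ c₂ : ℝ)
    (hc₁ : c₁ = (n : ℝ) - c / n)
    (hc₂ : c₂ = (1 - (n : ℝ)) + c / ((n : ℝ) + 1))
    (F : ℝ → ℝ)
    (hF : ∀ x : ℝ, F x = -(c / ((n : ℝ) * ((n : ℝ) + 1))) * x ^ (n + 1)
      + x ^ n - c₁ * x - c₂)
    (b : ℝ) (hb : 1 < b) (hFb : F b = 0) :
    deriv F b ≠ -b ^ (n - 1) := by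
  obtain ⟨k, rfl⟩ : ∃ k, n = k + 1 := ⟨n - 1, by omega⟩
  intro hderiv
  have hF' : HasDerivAt F (-(c / (((k + 1 : ℕ) : ℝ) * (((k + 1 : ℕ) : ℝ) + 1)))
      * (((k + 1 + 1 : ℕ) : ℝ) * b ^ (k + 1)) + ((k + 1 : ℕ) : ℝ) * b ^ k - c₁ * 1) b := by
    rw [funext hF]
    exact ((((hasDerivAt_pow (k + 1 + 1) b).const_mul _).add (hasDerivAt_pow (k + 1) b)).sub
      ((hasDerivAt_id b).const_mul c₁)).sub_const c₂
  rw [hF'.deriv, Nat.add_sub_cancel] at hderiv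
  rw [hF] at hFb
  obtain ⟨t, rfl⟩ : ∃ t : ℝ, c = t * ((k + 1) * (k + 2)) :=
    ⟨c / ((k + 1) * (k + 2)), by field_simp⟩
  have hk₁ : (k : ℝ) + 1 ≠ 0 := by positivity
  have hk₂ : (k : ℝ) + 2 ≠ 0 := by positivity
  have ht : t * (((k : ℝ) + 1) * (k + 2)) / ((k + 1) * (k + 2)) = t := by field_simp
  have ht₁ : t * (((k : ℝ) + 1) * (k + 2)) / (k + 1) = t * (k + 2) := by field_simp
  have ht₂ : t * (((k : ℝ) + 1) * (k + 2)) / (k + 2) = t * (k + 1) := by field_simp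
  push_cast at hFb hderiv hc₁ hc₂
  rw [show (k : ℝ) + 1 + 1 = k + 2 by ring] at hFb hderiv hc₂
  rw [ht₁] at hc₁
  rw [ht₂] at hc₂
  rw [ht, hc₁, hc₂] at hFb
  rw [ht, hc₁] at hderiv
  have hpos := eliminant_pos hb k
  refine hpos.ne' ?_
  linear_combination (b ^ (k + 2) - (k + 2) * b + (k + 1)) * hderiv
    - (k + 2) * (b ^ (k + 1) - 1) * hFb
end

section
/- Suppose c > 0 and a·c < n(n−1), and let b > a satisfy F(b) = 0 and F(x) > 0 for all x ∈ (a, b). Then for every φ₀ ∈ (a, b) the function x ↦ x^(n−1)/F(x) is not integrable on [φ₀, b) (the improper integral ∫_{φ₀}^b x^(n−1)/F(x) dx diverges to +∞). -/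
open MeasureTheory

open Filter Topology Asymptotics in
/-- If `g` is differentiable at `b` with `g b = 0` and `g` does not vanish to the left of `b`, and
`h` is continuous at `b` with `h b ≠ 0`, then `h / g` is not integrable on any left neighborhood
of `b`. -/
theorem not_integrableOn_div_of_differentiableAt_of_eq_zero {g h : ℝ → ℝ} {b : ℝ} {k : Set ℝ}
    (hk : k ∈ 𝓝[<] b) (hg : DifferentiableAt ℝ g b) (hgb : g b = 0)
    (hg0 : ∀ᶠ x in 𝓝[<] b, g x ≠ 0) (hh : ContinuousAt h b) (hhb : h b ≠ 0) :
    ¬ IntegrableOn (fun x => h x / g x) k := by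
  have hderiv : ∀ᶠ x in 𝓝[<] b, HasDerivAt (fun x => Real.log (x - b)) (x - b)⁻¹ x := by
    filter_upwards [self_mem_nhdsWithin] with x hx
    simpa using ((hasDerivAt_id x).sub_const b).log (sub_ne_zero.2 (ne_of_lt hx))
  have hlog : Tendsto (fun x => ‖Real.log (x - b)‖) (𝓝[<] b) atTop := by
    refine tendsto_abs_atBot_atTop.comp (Real.tendsto_log_nhdsNE_zero.comp ?_)
    rw [← sub_self b]
    exact (((hasDerivAt_id b).sub_const b).tendsto_nhdsNE one_ne_zero).mono_left
      (nhdsWithin_mono _ fun x hx => ne_of_lt hx)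
  have hO : (fun x => g x * (h x)⁻¹) =O[𝓝[<] b] fun x => x - b := by
    have := hg.isBigO_sub.mul ((hh.inv₀ hhb).tendsto.isBigO_one ℝ)
    simpa [hgb] using this.mono nhdsWithin_le_nhds
  have hinv : (fun x => (x - b)⁻¹) =O[𝓝[<] b] fun x => h x / g x := by
    refine (hO.inv_rev ?_).congr_right fun x => by rw [mul_inv, inv_inv, mul_comm, div_eq_mul_inv]
    filter_upwards [hg0, nhdsWithin_le_nhds (hh.eventually_ne hhb)] with x hgx hhx hx
    exact absurd hx (mul_ne_zero hgx (inv_ne_zero hhx))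
  exact not_integrableOn_of_tendsto_norm_atTop_of_deriv_isBigO_filter (𝓝[<] b) hk
    (hderiv.mono fun x hx => hx.differentiableAt) hlog
    (hinv.congr' (hderiv.mono fun x hx => hx.deriv.symm) EventuallyEq.rfl)

/-- If `c > 0`, `a·c < n(n-1)`, and `b > a` is a zero of `F` with `F > 0`
on `(a, b)`, then `x ↦ x^(n-1)/F(x)` is not integrable on `[φ₀, b)`
for any `φ₀ ∈ (a, b)`. -/
theorem stmt_11 (n : ℕ) (hn : 2 ≤ n) (a c : ℝ) (ha : 0 < a) (hc : 0 < c)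
    (hac : a * c < (n : ℝ) * ((n : ℝ) - 1))
    (c₁ c₂ : ℝ)
    (hc₁ : c₁ = (n : ℝ) * a ^ (n - 1) - (c / n) * a ^ n)
    (hc₂ : c₂ = (1 - (n : ℝ)) * a ^ n + (c / ((n : ℝ) + 1)) * a ^ (n + 1))
    (F : ℝ → ℝ)
    (hF : ∀ x : ℝ, F x = -(c / ((n : ℝ) * ((n : ℝ) + 1))) * x ^ (n + 1)
      + x ^ n - c₁ * x - c₂)
    (b : ℝ) (hb : a < b) (hFb : F b = 0)
    (hFpos : ∀ x ∈ Set.Ioo a b, 0 < F x) :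
    ∀ φ₀ ∈ Set.Ioo a b,
      ¬ IntegrableOn (fun x => x ^ (n - 1) / F x) (Set.Ico φ₀ b) := by
  intro φ₀ hφ₀
  refine not_integrableOn_div_of_differentiableAt_of_eq_zero (Ico_mem_nhdsLT hφ₀.2) ?_ hFb ?_
    (by fun_prop) (pow_ne_zero _ (ha.trans hb).ne')
  · rw [funext hF]
    fun_prop
  · filter_upwards [Ioo_mem_nhdsLT hb] with x hx using (hFpos x hx).ne'
end

section
/- Suppose c > 0 and a·c < n(n−1), and let b > a satisfy F(b) = 0 and F(x) > 0 for all x ∈ (a, b). Then for every φ₀ ∈ (a, b) the function x ↦ √(x^(n−1)/F(x)) is integrable on [φ₀, b) (the improper integral ∫_{φ₀}^b √(x^(n−1)/F(x)) dx is finite). -/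
open MeasureTheory

theorem integrableOn_Ico_one_div_sqrt_sub (p b : ℝ) :
    IntegrableOn (fun x => 1 / √(b - x)) (Set.Ico p b) := by
  rcases le_or_gt b p with h | h
  · simp [Set.Ico_eq_empty_of_le h]
  have h₁ : IntervalIntegrable (fun x : ℝ => (b - x) ^ (-(1 / 2) : ℝ)) volume p b := by
    have h₀ := (intervalIntegral.intervalIntegrable_rpow' (a := b - p) (b := 0)
      (r := -(1 / 2)) (by norm_num)).comp_sub_left b
    simpa using h₀
  rw [intervalIntegrable_iff_integrableOn_Ico_of_le h.le] at h₁
  refine h₁.congr_fun (fun x hx => ?_) measurableSet_Ico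
  have hx₀ : 0 ≤ b - x := sub_nonneg.2 hx.2.le
  simp only [Real.rpow_neg hx₀, Real.sqrt_eq_rpow, one_div]

/-- Near a simple zero `b` of `f`, the singularity of `√(g / f)` is integrable. -/
theorem integrableOn_Ico_sqrt_div_of_simple_zero {f g : ℝ → ℝ} {f' p b : ℝ}
    (hf : ContinuousOn f (Set.Icc p b)) (hg : ContinuousOn g (Set.Icc p b))
    (hfb : f b = 0) (hderiv : HasDerivAt f f' b) (hf' : f' < 0)
    (hpos : ∀ x ∈ Set.Ico p b, 0 < f x) :
    IntegrableOn (fun x => √(g x / f x)) (Set.Ico p b) := by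
  have hfact (x : ℝ) : f x = (b - x) * -dslope f b x := by
    have h := sub_smul_dslope f b x
    rw [hfb, smul_eq_mul] at h
    linarith
  have hcont : ContinuousOn (dslope f b) (Set.Icc p b) := by
    intro x hx
    rcases eq_or_ne x b with rfl | hne
    · exact (continuousAt_dslope_same.2 hderiv.differentiableAt).continuousWithinAt
    · exact (continuousWithinAt_dslope_of_ne hne).2 (hf x hx)
  have hpos' : ∀ x ∈ Set.Icc p b, 0 < -dslope f b x := by
    intro x hx
    rcases hx.2.eq_or_lt with rfl | hlt
    · rw [dslope_same, hderiv.deriv]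
      linarith
    · have h := hpos x ⟨hx.1, hlt⟩
      rw [hfact] at h
      exact pos_of_mul_pos_right h (sub_nonneg.2 hlt.le)
  have hquot : ContinuousOn (fun x => √(g x / -dslope f b x)) (Set.Icc p b) :=
    (hg.div hcont.neg fun x hx => (hpos' x hx).ne').sqrt
  refine ((integrableOn_Ico_one_div_sqrt_sub p b).mul_continuousOn_of_subset hquot
    measurableSet_Ico isCompact_Icc Set.Ico_subset_Icc_self).congr_fun
    (fun x hx => ?_) measurableSet_Ico
  have hx₀ : 0 ≤ 1 / (b - x) := one_div_nonneg.2 (sub_nonneg.2 hx.2.le)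
  have hsplit : g x / f x = 1 / (b - x) * (g x / -dslope f b x) := by
    rw [hfact x, div_mul_div_comm, one_mul]
  simp only [hsplit, Real.sqrt_mul hx₀, Real.sqrt_div zero_le_one, Real.sqrt_one]

/-- A function that is convex on `[a, m]` and concave on `[m, ∞)`, vanishes at `a` and `b` and is
positive in between has negative derivative at `b`. -/
theorem deriv_neg_of_convexOn_of_concaveOn {f : ℝ → ℝ} {f' a m b : ℝ} (ham : a < m) (hab : a < b)
    (hconvex : ConvexOn ℝ (Set.Icc a m) f) (hconcave : ConcaveOn ℝ (Set.Ici m) f)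
    (hfa : f a = 0) (hfb : f b = 0) (hpos : ∀ x ∈ Set.Ioo a b, 0 < f x)
    (hderiv : HasDerivAt f f' b) : f' < 0 := by
  have hmb : m < b := by
    by_contra! hbm
    have h := hconvex.2 (Set.left_mem_Icc.2 ham.le) ⟨hab.le, hbm⟩
      (by norm_num : (0 : ℝ) ≤ 1 / 2) (by norm_num : (0 : ℝ) ≤ 1 / 2) (by norm_num)
    simp only [hfa, hfb, smul_eq_mul, mul_zero, add_zero] at h
    exact (hpos (1 / 2 * a + 1 / 2 * b) ⟨by linarith, by linarith⟩).not_ge h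
  have h := hconcave.le_slope_of_hasDerivAt Set.self_mem_Ici hmb.le hmb hderiv
  rw [slope_def_field, hfb] at h
  exact h.trans_lt (div_neg_of_neg_of_pos (by linarith [hpos m ⟨ham, hmb⟩]) (sub_pos.2 hmb))

/-- If `c > 0`, `a·c < n(n-1)`, and `b > a` is a zero of `F` with `F > 0`
on `(a, b)`, then `x ↦ √(x^(n-1)/F(x))` is integrable on `[φ₀, b)` for
every `φ₀ ∈ (a, b)`. -/
theorem stmt_12 (n : ℕ) (hn : 2 ≤ n) (a c : ℝ) (ha : 0 < a) (hc : 0 < c)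
    (hac : a * c < (n : ℝ) * ((n : ℝ) - 1))
    (c₁ c₂ : ℝ)
    (hc₁ : c₁ = (n : ℝ) * a ^ (n - 1) - (c / n) * a ^ n)
    (hc₂ : c₂ = (1 - (n : ℝ)) * a ^ n + (c / ((n : ℝ) + 1)) * a ^ (n + 1))
    (F : ℝ → ℝ)
    (hF : ∀ x : ℝ, F x = -(c / ((n : ℝ) * ((n : ℝ) + 1))) * x ^ (n + 1)
      + x ^ n - c₁ * x - c₂)
    (b : ℝ) (hb : a < b) (hFb : F b = 0)
    (hFpos : ∀ x ∈ Set.Ioo a b, 0 < F x) :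
    ∀ φ₀ ∈ Set.Ioo a b,
      IntegrableOn (fun x => Real.sqrt (x ^ (n - 1) / F x)) (Set.Ico φ₀ b) := by
  intro φ₀ hφ₀
  obtain ⟨k, rfl⟩ := Nat.exists_eq_add_of_le' hn
  simp only [show k + 2 - 1 = k + 1 from rfl, Nat.cast_add,
    Nat.cast_ofNat] at *
  let F' : ℝ → ℝ := fun x => -(c / (k + 2)) * x ^ (k + 2) + (k + 2) * x ^ (k + 1) - c₁
  let F'' : ℝ → ℝ := fun x => x ^ k * ((k + 2) * (k + 1) - c * x)
  have hd (x : ℝ) : HasDerivAt F (F' x) x := by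
    rw [funext hF]
    refine (((((hasDerivAt_pow (k + 3) x).const_mul (-(c / (((k : ℝ) + 2) * (k + 2 + 1))))).add
      (hasDerivAt_pow (k + 2) x)).sub ((hasDerivAt_id x).const_mul c₁)).sub_const c₂).congr_deriv ?_
    simp only [F', Nat.add_one_sub_one, show k + 3 - 1 = k + 2 from rfl]
    push_cast
    field_simp
    ring
  have hd' (x : ℝ) : HasDerivAt F' (F'' x) x := by
    refine ((((hasDerivAt_pow (k + 2) x).const_mul (-(c / ((k : ℝ) + 2)))).add
      ((hasDerivAt_pow (k + 1) x).const_mul ((k : ℝ) + 2))).sub_const c₁).congr_deriv ?_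
    simp only [F'', Nat.add_one_sub_one, show k + 2 - 1 = k + 1 from rfl]
    push_cast
    field_simp
    ring
  have hFcont : Continuous F := continuous_iff_continuousAt.2 fun x => (hd x).continuousAt
  have hFa : F a = 0 := by
    rw [hF, hc₁, hc₂]
    field_simp
    ring
  set m : ℝ := (k + 2) * (k + 1) / c with hm
  have hcm : c * m = (k + 2) * (k + 1) := by
    rw [hm]
    field_simp
  have ham : a < m := by
    rw [hm, lt_div_iff₀ hc]
    linarith
  have hconvex : ConvexOn ℝ (Set.Icc a m) F := by
    refine convexOn_of_hasDerivWithinAt2_nonneg (convex_Icc a m) hFcont.continuousOn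
      (fun x _ => (hd x).hasDerivWithinAt) (fun x _ => (hd' x).hasDerivWithinAt) fun x hx => ?_
    rw [interior_Icc] at hx
    refine mul_nonneg (pow_nonneg (ha.trans hx.1).le k) (sub_nonneg.2 ?_)
    rw [← hcm]
    exact mul_le_mul_of_nonneg_left hx.2.le hc.le
  have hconcave : ConcaveOn ℝ (Set.Ici m) F := by
    refine concaveOn_of_hasDerivWithinAt2_nonpos (convex_Ici m) hFcont.continuousOn
      (fun x _ => (hd x).hasDerivWithinAt) (fun x _ => (hd' x).hasDerivWithinAt) fun x hx => ?_
    rw [interior_Ici] at hx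
    have hmx : m < x := hx
    refine mul_nonpos_of_nonneg_of_nonpos (pow_nonneg (ha.trans (ham.trans hmx)).le k)
      (sub_nonpos.2 ?_)
    rw [← hcm]
    exact mul_le_mul_of_nonneg_left hmx.le hc.le
  exact integrableOn_Ico_sqrt_div_of_simple_zero hFcont.continuousOn
    (continuous_pow (k + 1)).continuousOn hFb (hd b)
    (deriv_neg_of_convexOn_of_concaveOn ham hb hconvex hconcave hFa hFb hFpos (hd b))
    fun x hx => hFpos x ⟨hφ₀.1.trans_le hx.1, hx.2⟩
end

section
/- H₃(a,b) > 0, i.e., (∫ₐᵇ x·Q(x)/(1+λx) dx)·(∫ₐᵇ Q(x)/x dx) > (∫ₐᵇ Q(x) dx)·(∫ₐᵇ Q(x)/(1+λx) dx). -/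
/-- Strict Cauchy–Schwarz inequality for the moments of a positive weight on an interval. -/
theorem sq_integral_mul_lt_of_pos {w : ℝ → ℝ} {a b : ℝ} (hab : a < b)
    (hw : Continuous w) (hpos : ∀ x ∈ Set.Icc a b, 0 < w x) :
    (∫ x in a..b, x * w x) ^ 2 < (∫ x in a..b, x ^ 2 * w x) * ∫ x in a..b, w x := by
  have h0 : 0 < ∫ x in a..b, w x :=
    intervalIntegral.integral_pos hab hw.continuousOn
      (fun x hx => (hpos x (Set.Ioc_subset_Icc_self hx)).le)
      ⟨a, Set.left_mem_Icc.2 hab.le, hpos a (Set.left_mem_Icc.2 hab.le)⟩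
  set M0 := ∫ x in a..b, w x with hM0
  set M1 := ∫ x in a..b, x * w x with hM1
  set M2 := ∫ x in a..b, x ^ 2 * w x with hM2
  have key : ∫ x in a..b, (M0 * x - M1) ^ 2 * w x = M0 * (M2 * M0 - M1 ^ 2) := by
    have hexp : ∀ x, (M0 * x - M1) ^ 2 * w x
        = M0 ^ 2 * (x ^ 2 * w x) - 2 * M0 * M1 * (x * w x) + M1 ^ 2 * w x := fun x => by ring
    simp_rw [hexp]
    rw [intervalIntegral.integral_add, intervalIntegral.integral_sub,
      intervalIntegral.integral_const_mul, intervalIntegral.integral_const_mul,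
      intervalIntegral.integral_const_mul, ← hM0, ← hM1, ← hM2]
    · ring
    all_goals exact Continuous.intervalIntegrable (by fun_prop) _ _
  have hint : 0 < ∫ x in a..b, (M0 * x - M1) ^ 2 * w x := by
    refine intervalIntegral.integral_pos hab (by fun_prop)
      (fun x hx => mul_nonneg (sq_nonneg _) (hpos x (Set.Ioc_subset_Icc_self hx)).le) ?_
    by_cases h : M0 * a - M1 = 0
    · have hb : M0 * b - M1 ≠ 0 := by nlinarith
      have hmem := Set.right_mem_Icc.2 hab.le
      exact ⟨b, hmem, mul_pos (by positivity) (hpos b hmem)⟩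
    · have hmem := Set.left_mem_Icc.2 hab.le
      exact ⟨a, hmem, mul_pos (by positivity) (hpos a hmem)⟩
  rw [key] at hint
  linarith [pos_of_mul_pos_right hint h0.le]

/-- `H₃(a,b) > 0`: for `λ < 0`, `0 < a < b < -1/λ` and
`Q(x) = (1+λx)^m·x^(n-1)`,
`(∫ₐᵇ x·Q/(1+λx))·(∫ₐᵇ Q/x) > (∫ₐᵇ Q)·(∫ₐᵇ Q/(1+λx))`. -/
theorem stmt_16 (m n : ℕ) (hm : 1 ≤ m) (hn : 2 ≤ n) (lam : ℝ) (hlam : lam < 0)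
    (a b : ℝ) (ha : 0 < a) (hab : a < b) (hb : b < -1 / lam)
    (Q : ℝ → ℝ)
    (hQ : ∀ x : ℝ, Q x = (1 + lam * x) ^ m * x ^ (n - 1)) :
    (∫ x in a..b, x * Q x / (1 + lam * x)) * (∫ x in a..b, Q x / x)
      > (∫ x in a..b, Q x) * (∫ x in a..b, Q x / (1 + lam * x)) := by
  obtain ⟨k, rfl⟩ := Nat.exists_eq_add_of_le' hm
  obtain ⟨l, rfl⟩ := Nat.exists_eq_add_of_le' hn
  have hx0 : ∀ x ∈ Set.Icc a b, 0 < x := fun x hx => ha.trans_le hx.1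
  have hx1 : ∀ x ∈ Set.Icc a b, 0 < 1 + lam * x := fun x hx => by
    have := (lt_div_iff_of_neg hlam).1 (hx.2.trans_lt hb)
    linarith
  let w : ℝ → ℝ := fun x => (1 + lam * x) ^ k * x ^ l
  have hw : Continuous w := by fun_prop
  have hQw : ∀ x, Q x = (1 + lam * x) * x * w x := fun x => by
    rw [hQ, show l + 2 - 1 = l + 1 from rfl]
    ring
  have hCS := sq_integral_mul_lt_of_pos hab hw fun x hx =>
    mul_pos (pow_pos (hx1 x hx) k) (pow_pos (hx0 x hx) l)
  have e1 : ∫ x in a..b, x * Q x / (1 + lam * x) = ∫ x in a..b, x ^ 2 * w x := by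
    refine intervalIntegral.integral_congr fun x hx => ?_
    rw [Set.uIcc_of_le hab.le] at hx
    have := (hx1 x hx).ne'
    simp only [hQw]
    rw [div_eq_iff this]
    ring
  have e2 : ∫ x in a..b, Q x / (1 + lam * x) = ∫ x in a..b, x * w x := by
    refine intervalIntegral.integral_congr fun x hx => ?_
    rw [Set.uIcc_of_le hab.le] at hx
    have := (hx1 x hx).ne'
    simp only [hQw]
    rw [div_eq_iff this]
    ring
  have e3 : ∫ x in a..b, Q x / x = (∫ x in a..b, w x) + lam * ∫ x in a..b, x * w x := by
    rw [← intervalIntegral.integral_const_mul, ← intervalIntegral.integral_add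
      (Continuous.intervalIntegrable (by fun_prop) _ _)
      (Continuous.intervalIntegrable (by fun_prop) _ _)]
    refine intervalIntegral.integral_congr fun x hx => ?_
    rw [Set.uIcc_of_le hab.le] at hx
    have := (hx0 x hx).ne'
    simp only [hQw]
    rw [div_eq_iff this]
    ring
  have e4 : ∫ x in a..b, Q x
      = (∫ x in a..b, x * w x) + lam * ∫ x in a..b, x ^ 2 * w x := by
    rw [← intervalIntegral.integral_const_mul, ← intervalIntegral.integral_add
      (Continuous.intervalIntegrable (by fun_prop) _ _)
      (Continuous.intervalIntegrable (by fun_prop) _ _)]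
    refine intervalIntegral.integral_congr fun x _ => ?_
    simp only [hQw]
    ring
  rw [e1, e2, e3, e4]
  linarith
end

section
/- For every real number c_M > 0 there exist real numbers a, b with 0 < a < b < −1/λ such that n(n−1)·H₁(a,b) = c_M·H₂(a,b). -/
open intervalIntegral Set

/-- Lagrange's identity for the Cauchy–Schwarz defect of a weight `w` and a function `φ`. -/
theorem integral_integral_mul_sub_sq {w φ : ℝ → ℝ} (hw : Continuous w) (hφ : Continuous φ)
    (a b : ℝ) :
    ∫ x in a..b, ∫ y in a..b, w x * w y * (φ x - φ y) ^ 2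
      = 2 * ((∫ x in a..b, w x) * (∫ x in a..b, φ x ^ 2 * w x)
        - (∫ x in a..b, φ x * w x) ^ 2) := by
  have expand : ∀ (p q r : ℝ), ∫ y in a..b, (p * w y - q * (φ y * w y) + r * (φ y ^ 2 * w y))
      = p * (∫ y in a..b, w y) - q * (∫ y in a..b, φ y * w y)
        + r * ∫ y in a..b, φ y ^ 2 * w y := by
    intro p q r
    rw [integral_add, integral_sub, integral_const_mul, integral_const_mul, integral_const_mul]
    all_goals exact Continuous.intervalIntegrable (by fun_prop) _ _
  have inner : ∀ x, ∫ y in a..b, w x * w y * (φ x - φ y) ^ 2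
      = (∫ y in a..b, φ y ^ 2 * w y) * w x - (2 * ∫ y in a..b, φ y * w y) * (φ x * w x)
        + (∫ y in a..b, w y) * (φ x ^ 2 * w x) := by
    intro x
    rw [integral_congr (g := fun y => (w x * φ x ^ 2) * w y - (2 * w x * φ x) * (φ y * w y)
      + w x * (φ y ^ 2 * w y)) (fun y _ => by ring), expand]
    ring
  simp_rw [inner]
  rw [expand]
  ring

/-- A pointwise comparison of kernels gives a comparison of Cauchy–Schwarz defects. -/
theorem mul_defect_le_mul_defect {w φ v ψ : ℝ → ℝ} (hw : Continuous w) (hφ : Continuous φ)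
    (hv : Continuous v) (hψ : Continuous ψ) {a b α β : ℝ} (hab : a ≤ b)
    (h : ∀ x ∈ Icc a b, ∀ y ∈ Icc a b,
      α * (w x * w y * (φ x - φ y) ^ 2) ≤ β * (v x * v y * (ψ x - ψ y) ^ 2)) :
    α * ((∫ x in a..b, w x) * (∫ x in a..b, φ x ^ 2 * w x) - (∫ x in a..b, φ x * w x) ^ 2)
      ≤ β * ((∫ x in a..b, v x) * (∫ x in a..b, ψ x ^ 2 * v x)
        - (∫ x in a..b, ψ x * v x) ^ 2) := by
  have key : α * (∫ x in a..b, ∫ y in a..b, w x * w y * (φ x - φ y) ^ 2)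
      ≤ β * ∫ x in a..b, ∫ y in a..b, v x * v y * (ψ x - ψ y) ^ 2 := by
    simp_rw [← integral_const_mul]
    refine integral_mono_on hab ?_ ?_ fun x hx => integral_mono_on hab ?_ ?_ fun y hy => h x hx y hy
    · exact (continuous_parametric_intervalIntegral_of_continuous' (by fun_prop) a b
        ).intervalIntegrable _ _
    · exact (continuous_parametric_intervalIntegral_of_continuous' (by fun_prop) a b
        ).intervalIntegrable _ _
    · exact Continuous.intervalIntegrable (by fun_prop) _ _
    · exact Continuous.intervalIntegrable (by fun_prop) _ _
  rw [integral_integral_mul_sub_sq hw hφ, integral_integral_mul_sub_sq hv hψ] at key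
  linarith

/-- For every `c_M > 0` there exist `0 < a < b < -1/λ` such that
`n(n-1)·H₁(a,b) = c_M·H₂(a,b)`. -/
theorem stmt_17 (m n : ℕ) (hm : 1 ≤ m) (hn : 2 ≤ n) (lam : ℝ) (hlam : lam < 0)
    (Q : ℝ → ℝ)
    (hQ : ∀ x : ℝ, Q x = (1 + lam * x) ^ m * x ^ (n - 1))
    (c_M : ℝ) (hcM : 0 < c_M) :
    ∃ a b : ℝ, 0 < a ∧ a < b ∧ b < -1 / lam ∧
      (n : ℝ) * ((n : ℝ) - 1) *
        ((∫ x in a..b, Q x / x) * (∫ x in a..b, x * Q x)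
          - (∫ x in a..b, Q x) ^ 2)
      = c_M *
        (-(1 / lam) * (∫ x in a..b, Q x / (1 + lam * x))
            * (∫ x in a..b, (1 + lam * x) * Q x)
          + (1 / lam) * (∫ x in a..b, Q x) ^ 2) := by
  obtain ⟨k, rfl⟩ := Nat.exists_eq_add_of_le hm
  obtain ⟨l, rfl⟩ := Nat.exists_eq_add_of_le hn
  set K : ℝ := ((2 + l : ℕ) : ℝ) * (((2 + l : ℕ) : ℝ) - 1) with hK
  have hKpos : 0 < K := by
    rw [hK]; push_cast
    have : (0 : ℝ) ≤ l := l.cast_nonneg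
    apply mul_pos <;> linarith
  let u : ℝ → ℝ := fun x => 1 + lam * x
  let q : ℝ → ℝ := fun x => u x ^ k * x ^ l
  let w₁ : ℝ → ℝ := fun x => u x * q x
  let w₂ : ℝ → ℝ := fun x => x * q x
  have hu : Continuous u := by fun_prop
  have hq : Continuous q := by fun_prop
  have hw₁ : Continuous w₁ := by fun_prop
  have hw₂ : Continuous w₂ := by fun_prop
  have upos : ∀ {x}, x < -1 / lam → 0 < u x := by
    intro x hx
    have := (lt_div_iff_of_neg hlam).1 hx
    simp only [u]; linarith
  have hQq : ∀ x, Q x = x * u x * q x := by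
    intro x
    rw [hQ, show 2 + l - 1 = l + 1 by omega]
    simp only [q, u]; ring
  let F : ℝ → ℝ → ℝ := fun a b =>
    K * ((∫ x in a..b, w₁ x) * (∫ x in a..b, x ^ 2 * w₁ x) - (∫ x in a..b, x * w₁ x) ^ 2)
    - (-c_M / lam) * ((∫ x in a..b, w₂ x) * (∫ x in a..b, u x ^ 2 * w₂ x)
      - (∫ x in a..b, u x * w₂ x) ^ 2)
  suffices hF : ∃ a b : ℝ, 0 < a ∧ a < b ∧ b < -1 / lam ∧ F a b = 0 by
    obtain ⟨a, b, ha, hab, hb, h⟩ := hF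
    refine ⟨a, b, ha, hab, hb, ?_⟩
    have mem : ∀ x ∈ uIcc a b, 0 < x ∧ 0 < u x := by
      intro x hx
      rw [uIcc_of_le hab.le] at hx
      exact ⟨ha.trans_le hx.1, upos (hx.2.trans_lt hb)⟩
    rw [integral_congr (f := fun x => Q x / x) (g := w₁) fun x hx => by
        have := (mem x hx).1.ne'
        simp only [hQq, w₁]; field_simp,
      integral_congr (f := fun x => x * Q x) (g := fun x => x ^ 2 * w₁ x) fun x _ => by
        simp only [hQq, w₁]; ring,
      integral_congr (f := fun x => Q x / (1 + lam * x)) (g := w₂) fun x hx => by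
        have := (mem x hx).2.ne'
        change Q x / u x = w₂ x
        simp only [hQq, w₂]; field_simp,
      integral_congr (f := fun x => (1 + lam * x) * Q x) (g := fun x => u x ^ 2 * w₂ x)
        fun x _ => by simp only [hQq, w₂, u]; ring,
      integral_congr (f := Q) (g := fun x => x * w₁ x) fun x _ => by
        simp only [hQq, w₁]; ring]
    have hB : ∫ x in a..b, u x * w₂ x = ∫ x in a..b, x * w₁ x :=
      integral_congr fun x _ => by simp only [w₁, w₂]; ring
    simp only [F, hB] at h
    linear_combination h
  have kernel : ∀ x y, (-c_M / lam) * (w₂ x * w₂ y * (u x - u y) ^ 2)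
      = (-c_M * lam * (x * y)) * (q x * q y * (x - y) ^ 2) := by
    intro x y
    have := hlam.ne
    simp only [w₂, u]; field_simp; ring
  have kernel' : ∀ x y, K * (w₁ x * w₁ y * (x - y) ^ 2)
      = (K * (u x * u y)) * (q x * q y * (x - y) ^ 2) := by
    intro x y
    simp only [w₁]; ring
  have qnonneg : ∀ {x y}, 0 < x → 0 < y → x < -1 / lam → y < -1 / lam →
      0 ≤ q x * q y * (x - y) ^ 2 := by
    intro x y hx hy hx' hy'
    have := upos hx'
    have := upos hy'
    simp only [q]; positivity
  -- the point `t` where `K * u t ^ 2 = -c_M * lam * t ^ 2`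
  have hcl : 0 < -c_M * lam := by nlinarith
  set r := √K
  set s := √(-c_M * lam)
  have hr : 0 < r := Real.sqrt_pos.2 hKpos
  have hs : 0 < s := Real.sqrt_pos.2 hcl
  have hr2 : K = r * r := (Real.mul_self_sqrt hKpos.le).symm
  have hs2 : -c_M * lam = s * s := (Real.mul_self_sqrt hcl.le).symm
  have hden : 0 < s - lam * r := by nlinarith
  obtain ⟨t, ht⟩ : ∃ t, t = r / (s - lam * r) := ⟨_, rfl⟩
  have htpos : 0 < t := ht ▸ div_pos hr hden
  have hteq : t * (s - lam * r) = r := by rw [ht, div_mul_cancel₀ _ hden.ne']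
  have htlt : t < -1 / lam := by
    rw [lt_div_iff_of_neg hlam]
    have : 0 < r * (1 + lam * t) := by nlinarith [mul_pos htpos hs]
    nlinarith [pos_of_mul_pos_right this hr.le]
  have below : ∀ {x}, x ≤ t → s * x ≤ r * u x := by
    intro x hx; simp only [u]; nlinarith
  have above : ∀ {x}, t ≤ x → r * u x ≤ s * x := by
    intro x hx; simp only [u]; nlinarith
  obtain ⟨t', htt', ht'⟩ := exists_between htlt
  have hF₀ : 0 ≤ F (t / 2) t := by
    refine sub_nonneg.2 (mul_defect_le_mul_defect hw₂ hu hw₁ continuous_id (by linarith) ?_)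
    intro x hx y hy
    have hx0 : 0 < x := by linarith [hx.1]
    have hy0 : 0 < y := by linarith [hy.1]
    simp only [id]
    rw [kernel, kernel', hr2, hs2]
    refine mul_le_mul_of_nonneg_right ?_
      (qnonneg hx0 hy0 (hx.2.trans_lt htlt) (hy.2.trans_lt htlt))
    have := mul_le_mul (below hx.2) (below hy.2) (by positivity)
      (mul_pos hr (upos (hx.2.trans_lt htlt))).le
    linarith
  have hF₁ : F t t' ≤ 0 := by
    refine sub_nonpos.2 (mul_defect_le_mul_defect hw₁ continuous_id hw₂ hu htt'.le ?_)
    intro x hx y hy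
    have hx0 : 0 < x := by linarith [hx.1]
    have hy0 : 0 < y := by linarith [hy.1]
    simp only [id]
    rw [kernel, kernel', hr2, hs2]
    refine mul_le_mul_of_nonneg_right ?_
      (qnonneg hx0 hy0 (hx.2.trans_lt ht') (hy.2.trans_lt ht'))
    have := mul_le_mul (above hx.1) (above hy.1)
      (mul_pos hr (upos (hy.2.trans_lt ht'))).le (by positivity)
    linarith
  let α : ℝ → ℝ := fun σ => (1 - σ) * (t / 2) + σ * t
  let β : ℝ → ℝ := fun σ => (1 - σ) * t + σ * t'
  have hcont : ∀ f : ℝ → ℝ, Continuous f → Continuous fun σ => ∫ x in α σ..β σ, f x := by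
    intro f hf
    have hsub : ∀ σ, ∫ x in α σ..β σ, f x = (∫ x in 0..β σ, f x) - ∫ x in 0..α σ, f x := fun σ =>
      (integral_interval_sub_left (hf.intervalIntegrable _ _) (hf.intervalIntegrable _ _)).symm
    have hprim := continuous_primitive (μ := MeasureTheory.volume)
      (fun a b => hf.intervalIntegrable a b) 0
    simp_rw [hsub]
    exact (hprim.comp (by fun_prop)).sub (hprim.comp (by fun_prop))
  have hFcont : Continuous fun σ => F (α σ) (β σ) := by
    have h₁ := hcont w₁ hw₁
    have h₂ := hcont (fun x => x ^ 2 * w₁ x) (by fun_prop)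
    have h₃ := hcont (fun x => x * w₁ x) (by fun_prop)
    have h₄ := hcont w₂ hw₂
    have h₅ := hcont (fun x => u x ^ 2 * w₂ x) (by fun_prop)
    have h₆ := hcont (fun x => u x * w₂ x) (by fun_prop)
    exact (continuous_const.mul ((h₁.mul h₂).sub (h₃.pow 2))).sub
      (continuous_const.mul ((h₄.mul h₅).sub (h₆.pow 2)))
  obtain ⟨σ, ⟨hσ₀, hσ₁⟩, hσ⟩ := intermediate_value_Icc' zero_le_one hFcont.continuousOn
    (show (0 : ℝ) ∈ Icc (F (α 1) (β 1)) (F (α 0) (β 0)) from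
      ⟨by simpa [α, β] using hF₁, by simpa [α, β] using hF₀⟩)
  have hlt : α σ < β σ := by
    simp only [α, β]
    rcases hσ₀.eq_or_lt with rfl | hσpos
    · linarith
    · nlinarith [mul_pos hσpos (sub_pos.2 htt'), mul_nonneg (sub_nonneg.2 hσ₁) htpos.le]
  refine ⟨α σ, β σ, ?_, hlt, ?_, hσ⟩ <;> simp only [α, β] <;> nlinarith
end

section
/- For every real number c_M there exist real numbers a, b with 0 < a < b < −1/λ such that n(n−1)·H₁(a,b) + L₁(a,b) = c_M·H₂(a,b). -/
open Filter Topology Set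

/-- The integral of `(1 + l x) ^ p * x ^ k` over `[a, b]`. -/
noncomputable def powMoment (l : ℝ) (p k : ℕ) (a b : ℝ) : ℝ :=
  ∫ x in a..b, (1 + l * x) ^ p * x ^ k

/-- The difference of the two sides of the equation, for `m = j + 1` and `n = k + 2`, with all
integrands written as polynomials. -/
noncomputable def curvatureDefect (l c : ℝ) (j k : ℕ) (a b : ℝ) : ℝ :=
  ((k : ℝ) + 2) * ((k : ℝ) + 1) *
      (powMoment l (j + 1) k a b * powMoment l (j + 1) (k + 2) a b
        - powMoment l (j + 1) (k + 1) a b ^ 2)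
    + (1 + l * b) ^ (j + 1) * b ^ (k + 1) *
      (powMoment l (j + 1) (k + 2) a b - b * powMoment l (j + 1) (k + 1) a b)
    - c * (-(1 / l) * (powMoment l j (k + 1) a b * powMoment l (j + 2) (k + 1) a b
        - powMoment l (j + 1) (k + 1) a b ^ 2))

theorem continuous_powMoment (l : ℝ) (p k : ℕ) :
    Continuous fun z : ℝ × ℝ => powMoment l p k z.1 z.2 := by
  have hf : Continuous fun x : ℝ => (1 + l * x) ^ p * x ^ k := by fun_prop
  have h0 := intervalIntegral.continuous_primitive
    (μ := MeasureTheory.volume) (fun a b => hf.intervalIntegrable a b) 0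
  have h : (fun z : ℝ × ℝ => powMoment l p k z.1 z.2) = fun z : ℝ × ℝ =>
      (∫ x in (0 : ℝ)..z.2, (1 + l * x) ^ p * x ^ k)
        - ∫ x in (0 : ℝ)..z.1, (1 + l * x) ^ p * x ^ k := by
    funext z
    exact (intervalIntegral.integral_interval_sub_left (hf.intervalIntegrable _ _)
      (hf.intervalIntegrable _ _)).symm
  rw [h]
  exact (h0.comp continuous_snd).sub (h0.comp continuous_fst)

theorem continuous_curvatureDefect (l c : ℝ) (j k : ℕ) :
    Continuous fun z : ℝ × ℝ => curvatureDefect l c j k z.1 z.2 := by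
  have h := continuous_powMoment l
  have h1 := h (j + 1) k
  have h2 := h (j + 1) (k + 1)
  have h3 := h (j + 1) (k + 2)
  have h4 := h j (k + 1)
  have h5 := h (j + 2) (k + 1)
  unfold curvatureDefect
  fun_prop

theorem powMoment_succ_left (l : ℝ) (p k : ℕ) (a b : ℝ) :
    powMoment l (p + 1) k a b = powMoment l p k a b + l * powMoment l p (k + 1) a b := by
  unfold powMoment
  rw [← intervalIntegral.integral_const_mul, ← intervalIntegral.integral_add]
  · exact intervalIntegral.integral_congr fun x _ => by ring
  all_goals exact Continuous.intervalIntegrable (by fun_prop) _ _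

/-- First-order expansion at `b = 0` of the moment over `[0, b]`, normalised by `b ^ (k + 1)`. -/
theorem exists_powMoment_zero_eq (l : ℝ) (p : ℕ) : ∀ k : ℕ, ∃ J : ℝ → ℝ,
    J 0 = 1 / ((k : ℝ) + 1) ∧ HasDerivAt J (p * l / ((k : ℝ) + 2)) 0 ∧
      ∀ b, powMoment l p k 0 b = b ^ (k + 1) * J b := by
  induction p with
  | zero =>
    intro k
    refine ⟨fun _ => 1 / ((k : ℝ) + 1), rfl, ?_, fun b => ?_⟩
    · simpa using hasDerivAt_const (0 : ℝ) (1 / ((k : ℝ) + 1))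
    · simp [powMoment, integral_pow, div_eq_mul_inv]
  | succ p ih =>
    intro k
    obtain ⟨J, hJ0, hJd, hJ⟩ := ih k
    obtain ⟨K, hK0, hKd, hK⟩ := ih (k + 1)
    refine ⟨fun b => J b + l * (b * K b), by simp [hJ0], ?_, fun b => ?_⟩
    · refine (hJd.add (((hasDerivAt_id (0 : ℝ)).mul hKd).const_mul l)).congr_deriv ?_
      simp only [hK0, id]
      push_cast
      have : (k : ℝ) + 2 ≠ 0 := by positivity
      have : (k : ℝ) + 1 + 1 ≠ 0 := by positivity
      field_simp
      ring
    · rw [powMoment_succ_left, hJ, hK]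
      ring

theorem eventually_pos_of_hasDerivAt_pos {g : ℝ → ℝ} {d x : ℝ} (hg : HasDerivAt g d x)
    (hx : g x = 0) (hd : 0 < d) : ∀ᶠ y in 𝓝[>] x, 0 < g y := by
  have h := (hasDerivAt_iff_tendsto_slope.1 hg).mono_left
    (nhdsWithin_mono x fun y (hy : x < y) => hy.ne')
  filter_upwards [h.eventually_const_lt hd, self_mem_nhdsWithin] with y hy hxy
  rw [slope_def_field, hx, sub_zero] at hy
  exact (div_pos_iff_of_pos_right (sub_pos.2 hxy)).1 hy

/-- For `a = 0` the defect vanishes to order `2 n` at `b = 0`, and its next coefficient is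
positive. -/
theorem eventually_curvatureDefect_zero_pos {l : ℝ} (hl : l < 0) (c : ℝ) (j k : ℕ) :
    ∀ᶠ b in 𝓝[>] (0 : ℝ), 0 < curvatureDefect l c j k 0 b := by
  obtain ⟨A, hA0, hAd, hA⟩ := exists_powMoment_zero_eq l (j + 1) k
  obtain ⟨B, hB0, hBd, hB⟩ := exists_powMoment_zero_eq l (j + 1) (k + 1)
  obtain ⟨C, hC0, hCd, hC⟩ := exists_powMoment_zero_eq l (j + 1) (k + 2)
  obtain ⟨D, hD0, hDd, hD⟩ := exists_powMoment_zero_eq l j (k + 1)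
  obtain ⟨E, hE0, hEd, hE⟩ := exists_powMoment_zero_eq l (j + 2) (k + 1)
  have hl0 : l ≠ 0 := hl.ne
  have hk1 : (k : ℝ) + 1 ≠ 0 := by positivity
  have hk2 : (k : ℝ) + 2 ≠ 0 := by positivity
  have hk3 : (k : ℝ) + 3 ≠ 0 := by positivity
  have hk4 : (k : ℝ) + 4 ≠ 0 := by positivity
  have e1 : ((k + 1 : ℕ) : ℝ) + 1 = k + 2 := by push_cast; ring
  have e2 : ((k + 1 : ℕ) : ℝ) + 2 = k + 3 := by push_cast; ring
  have e3 : ((k + 2 : ℕ) : ℝ) + 1 = k + 3 := by push_cast; ring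
  have e4 : ((k + 2 : ℕ) : ℝ) + 2 = k + 4 := by push_cast; ring
  rw [e1] at hB0 hD0 hE0
  rw [e2] at hBd hDd hEd
  rw [e3] at hC0
  rw [e4] at hCd
  have hw : HasDerivAt (fun b : ℝ => (1 + l * b) ^ (j + 1)) ((j + 1) * l) 0 :=
    ((((hasDerivAt_id (0 : ℝ)).const_mul l).const_add 1).pow (j + 1)).congr_deriv (by simp)
  have hg := (((hAd.mul hCd).sub (hBd.pow 2)).const_mul (((k : ℝ) + 2) * ((k : ℝ) + 1))).add
    (hw.mul (hCd.sub hBd)) |>.sub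
      ((((hDd.mul hEd).sub (hBd.pow 2)).const_mul (-(1 / l))).const_mul c)
  have hpos : 0 < -(2 * ((j : ℝ) + 1) * l) / ((k + 2) * (k + 3) * (k + 4)) := by
    apply div_pos _ (by positivity)
    have : (0 : ℝ) < 2 * ((j : ℝ) + 1) := by positivity
    nlinarith
  have hev := eventually_pos_of_hasDerivAt_pos
    (hg.congr_deriv (g' := -(2 * ((j : ℝ) + 1) * l) / ((k + 2) * (k + 3) * (k + 4))) (by
      simp [hA0, hB0, hC0, hD0, hE0]
      field_simp
      ring)) (by
      simp [hA0, hB0, hC0, hD0, hE0]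
      field_simp
      ring) hpos
  filter_upwards [hev, self_mem_nhdsWithin] with b hb hb0
  have hb0 : 0 < b := hb0
  have key := mul_pos (pow_pos hb0 (2 * k + 4)) hb
  refine key.trans_eq ?_
  simp only [curvatureDefect, hA, hB, hC, hD, hE, Pi.add_apply, Pi.sub_apply, Pi.mul_apply,
    Pi.pow_apply]
  ring

/-- Averages of a continuous function over shrinking intervals converge. -/
theorem tendsto_powMoment_div (l : ℝ) (p k : ℕ) (a : ℝ) :
    Tendsto (fun b => powMoment l p k a b / (b - a)) (𝓝[>] a) (𝓝 ((1 + l * a) ^ p * a ^ k)) := by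
  have hf : Continuous fun x : ℝ => (1 + l * x) ^ p * x ^ k := by fun_prop
  have h := (hasDerivAt_iff_tendsto_slope.1 (hf.integral_hasStrictDerivAt a a).hasDerivAt).mono_left
    (nhdsWithin_mono a fun y (hy : a < y) => hy.ne')
  refine h.congr fun b => ?_
  simp [slope_def_field, powMoment]

/-- Near the diagonal the defect is dominated by its boundary term, which is negative. -/
theorem eventually_curvatureDefect_neg (l c : ℝ) (j k : ℕ) {a : ℝ} (ha : 0 < a)
    (hla : 0 < 1 + l * a) : ∀ᶠ b in 𝓝[>] a, curvatureDefect l c j k a b < 0 := by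
  have hf : Continuous fun x : ℝ => (1 + l * x) ^ (j + 1) * x ^ (k + 1) := by fun_prop
  set q : ℝ := (1 + l * a) ^ (j + 1) * a ^ (k + 1) / 2 with hq
  have hq0 : 0 < q := by positivity
  have hlow : ∀ᶠ b in 𝓝[>] a, ∀ x ∈ Icc a b, q < (1 + l * x) ^ (j + 1) * x ^ (k + 1) := by
    have h : ∀ᶠ x in 𝓝 a, q < (1 + l * x) ^ (j + 1) * x ^ (k + 1) :=
      hf.continuousAt.eventually_const_lt (by rw [hq] at *; linarith)
    obtain ⟨ε, hε, hball⟩ := Metric.eventually_nhds_iff.1 h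
    filter_upwards [Ioo_mem_nhdsGT (show a < a + ε by linarith)] with b hb x hx
    apply hball
    rw [Real.dist_eq, abs_lt]
    constructor <;> linarith [hx.1, hx.2, hb.2]
  have hT := tendsto_powMoment_div l
  have hlim := ((((hT (j + 1) k a).mul (hT (j + 1) (k + 2) a)).sub
      ((hT (j + 1) (k + 1) a).pow 2)).const_mul (((k : ℝ) + 2) * ((k : ℝ) + 1))).sub
    (((((hT j (k + 1) a).mul (hT (j + 2) (k + 1) a)).sub
      ((hT (j + 1) (k + 1) a).pow 2)).const_mul (-(1 / l))).const_mul c)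
  have hsmall := hlim.eventually_lt_const (u := q ^ 2 / 2) (by
    refine lt_of_eq_of_lt ?_ (by positivity : (0 : ℝ) < q ^ 2 / 2)
    ring)
  filter_upwards [hlow, hsmall, self_mem_nhdsWithin] with b hb hs hab
  have hab : a < b := hab
  have hh : 0 < b - a := sub_pos.2 hab
  have hint : q * ((b - a) ^ 2 / 2) ≤
      b * powMoment l (j + 1) (k + 1) a b - powMoment l (j + 1) (k + 2) a b := by
    have h1 : b * powMoment l (j + 1) (k + 1) a b - powMoment l (j + 1) (k + 2) a b =
        ∫ x in a..b, (b - x) * ((1 + l * x) ^ (j + 1) * x ^ (k + 1)) := by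
      unfold powMoment
      rw [← intervalIntegral.integral_const_mul, ← intervalIntegral.integral_sub]
      · exact intervalIntegral.integral_congr fun x _ => by ring
      all_goals exact Continuous.intervalIntegrable (by fun_prop) _ _
    have h2 : q * ((b - a) ^ 2 / 2) = ∫ x in a..b, (b - x) * q := by
      rw [intervalIntegral.integral_mul_const, intervalIntegral.integral_sub (by simp) (by simp)]
      simp
      ring
    rw [h1, h2]
    refine intervalIntegral.integral_mono_on hab.le
      (Continuous.intervalIntegrable (by fun_prop) _ _)
      (Continuous.intervalIntegrable (by fun_prop) _ _) fun x hx => ?_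
    exact mul_le_mul_of_nonneg_left (hb x hx).le (sub_nonneg.2 hx.2)
  have hQb := hb b (right_mem_Icc.2 hab.le)
  have hL : q * (q * ((b - a) ^ 2 / 2)) ≤ (1 + l * b) ^ (j + 1) * b ^ (k + 1) *
      (b * powMoment l (j + 1) (k + 1) a b - powMoment l (j + 1) (k + 2) a b) :=
    mul_le_mul hQb.le hint (by positivity) (hq0.le.trans hQb.le)
  have hs' := mul_lt_mul_of_pos_right hs (pow_pos hh 2)
  have hne := hh.ne'
  have hrest : ((k : ℝ) + 2) * ((k : ℝ) + 1) *
      (powMoment l (j + 1) k a b * powMoment l (j + 1) (k + 2) a b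
        - powMoment l (j + 1) (k + 1) a b ^ 2)
      - c * (-(1 / l) * (powMoment l j (k + 1) a b * powMoment l (j + 2) (k + 1) a b
        - powMoment l (j + 1) (k + 1) a b ^ 2)) < q ^ 2 / 2 * (b - a) ^ 2 := by
    refine lt_of_eq_of_lt ?_ hs'
    generalize 1 / l = r
    field_simp
  unfold curvatureDefect
  linarith

theorem convex_setOf_pos_lt_lt (B : ℝ) :
    Convex ℝ {z : ℝ × ℝ | 0 < z.1 ∧ z.1 < z.2 ∧ z.2 < B} := by
  have h1 : Convex ℝ {z : ℝ × ℝ | 0 < z.1} :=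
    convex_halfSpace_gt (LinearMap.fst ℝ ℝ ℝ).isLinear 0
  have h2 : Convex ℝ {z : ℝ × ℝ | 0 < z.2 - z.1} :=
    convex_halfSpace_gt (LinearMap.snd ℝ ℝ ℝ - LinearMap.fst ℝ ℝ ℝ).isLinear 0
  have h3 : Convex ℝ {z : ℝ × ℝ | z.2 < B} :=
    convex_halfSpace_lt (LinearMap.snd ℝ ℝ ℝ).isLinear B
  convert h1.inter (h2.inter h3) using 1
  ext z
  simp

theorem exists_curvatureDefect_eq_zero {l : ℝ} (hl : l < 0) (c : ℝ) (j k : ℕ) :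
    ∃ a b : ℝ, 0 < a ∧ a < b ∧ b < -1 / l ∧ curvatureDefect l c j k a b = 0 := by
  have hB : 0 < -1 / l := div_pos_of_neg_of_neg (by norm_num) hl
  have hcont := continuous_curvatureDefect l c j k
  obtain ⟨b₁, hb₁, hb₁0, hb₁B⟩ :=
    ((eventually_curvatureDefect_zero_pos hl c j k).and (Ioo_mem_nhdsGT hB)).exists
  have hev : ∀ᶠ a in 𝓝[>] (0 : ℝ), 0 < curvatureDefect l c j k a b₁ := by
    have h : Continuous fun a : ℝ => curvatureDefect l c j k a b₁ :=
      hcont.comp (by fun_prop : Continuous fun a : ℝ => (a, b₁))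
    exact (h.continuousAt.eventually_const_lt hb₁).filter_mono nhdsWithin_le_nhds
  obtain ⟨a₁, ha₁, ha₁0, ha₁b⟩ := (hev.and (Ioo_mem_nhdsGT hb₁0)).exists
  have hla : 0 < 1 + l * a₁ := by
    have := (lt_div_iff_of_neg hl).1 (ha₁b.trans hb₁B)
    linarith
  obtain ⟨b₂, hb₂, hb₂a, hb₂B⟩ :=
    ((eventually_curvatureDefect_neg l c j k ha₁0 hla).and
      (Ioo_mem_nhdsGT (ha₁b.trans hb₁B))).exists
  obtain ⟨⟨a, b⟩, ⟨h0, hab, hbB⟩, hz⟩ :=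
    (convex_setOf_pos_lt_lt (-1 / l)).isPreconnected.intermediate_value
      (a := (a₁, b₂)) (b := (a₁, b₁)) ⟨ha₁0, hb₂a, hb₂B⟩ ⟨ha₁0, ha₁b, hb₁B⟩
      hcont.continuousOn ⟨hb₂.le, ha₁.le⟩
  exact ⟨a, b, h0, hab, hbB, hz⟩

/-- For every `c_M` there exist `0 < a < b < -1/λ` such that
`n(n-1)·H₁(a,b) + L₁(a,b) = c_M·H₂(a,b)`. -/
theorem stmt_18 (m n : ℕ) (hm : 1 ≤ m) (hn : 2 ≤ n) (lam : ℝ) (hlam : lam < 0)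
    (Q : ℝ → ℝ)
    (hQ : ∀ x : ℝ, Q x = (1 + lam * x) ^ m * x ^ (n - 1))
    (c_M : ℝ) :
    ∃ a b : ℝ, 0 < a ∧ a < b ∧ b < -1 / lam ∧
      (n : ℝ) * ((n : ℝ) - 1) *
        ((∫ x in a..b, Q x / x) * (∫ x in a..b, x * Q x)
          - (∫ x in a..b, Q x) ^ 2)
      + (Q b * (∫ x in a..b, x * Q x) - b * Q b * (∫ x in a..b, Q x))
      = c_M *
        (-(1 / lam) * (∫ x in a..b, Q x / (1 + lam * x))
            * (∫ x in a..b, (1 + lam * x) * Q x)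
          + (1 / lam) * (∫ x in a..b, Q x) ^ 2) := by
  obtain ⟨j, rfl⟩ := Nat.exists_eq_add_of_le' hm
  obtain ⟨k, rfl⟩ := Nat.exists_eq_add_of_le' hn
  obtain ⟨a, b, ha, hab, hb, hz⟩ := exists_curvatureDefect_eq_zero hlam c_M j k
  refine ⟨a, b, ha, hab, hb, ?_⟩
  have hQ' : ∀ x, Q x = (1 + lam * x) ^ (j + 1) * x ^ (k + 1) := hQ
  have hx : ∀ x ∈ uIcc a b, x ≠ 0 ∧ 1 + lam * x ≠ 0 := by
    intro x hx
    rw [uIcc_of_le hab.le] at hx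
    have := (lt_div_iff_of_neg hlam).1 (hx.2.trans_lt hb)
    exact ⟨(ha.trans_le hx.1).ne', by linarith⟩
  have i1 : ∫ x in a..b, Q x / x = powMoment lam (j + 1) k a b :=
    intervalIntegral.integral_congr fun x h => by
      have := (hx x h).1
      simp only [hQ']
      field_simp
      ring
  have i2 : ∫ x in a..b, x * Q x = powMoment lam (j + 1) (k + 2) a b :=
    intervalIntegral.integral_congr fun x _ => by simp only [hQ']; ring
  have i3 : ∫ x in a..b, Q x = powMoment lam (j + 1) (k + 1) a b :=
    intervalIntegral.integral_congr fun x _ => hQ' x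
  have i4 : ∫ x in a..b, Q x / (1 + lam * x) = powMoment lam j (k + 1) a b :=
    intervalIntegral.integral_congr fun x h => by
      have := (hx x h).2
      simp only [hQ']
      field_simp
      ring
  have i5 : ∫ x in a..b, (1 + lam * x) * Q x = powMoment lam (j + 2) (k + 1) a b :=
    intervalIntegral.integral_congr fun x _ => by simp only [hQ']; ring
  rw [i1, i2, i3, i4, i5, hQ' b]
  unfold curvatureDefect at hz
  push_cast
  linear_combination hz
end

section
/- Let m ≥ 1 and n ≥ 2 be integers and λ > 0 a real number. For real numbers a, b with 0 < a < b, define Q(x) = (1+λx)^m·x^(n−1), H₁(a,b) = (∫ₐᵇ Q(x)/x dx)·(∫ₐᵇ x·Q(x) dx) − (∫ₐᵇ Q(x) dx)², H₂(a,b) = −(1/λ)·(∫ₐᵇ Q(x)/(1+λx) dx)·(∫ₐᵇ (1+λx)·Q(x) dx) + (1/λ)·(∫ₐᵇ Q(x) dx)², and L₁(a,b) = Q(b)·∫ₐᵇ x·Q(x) dx − b·Q(b)·∫ₐᵇ Q(x) dx. Then n(n−1)·H₁(a,b) + L₁(a,b) < m·(m+2n−1)·λ·H₂(a,b). -/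
open Set

/-- A function of the form `x ↦ (1 + l x) ^ m * x ^ k` has logarithmic derivative
`k / x + m l / (1 + l x)` at positive points. -/
lemma hasDerivAt_affine_pow_mul_pow (m k : ℕ) {l t : ℝ} (hl : 0 < l) (ht : 0 < t) :
    HasDerivAt (fun x : ℝ => (1 + l * x) ^ m * x ^ k)
      ((1 + l * t) ^ m * t ^ k * (k / t + m * l / (1 + l * t))) t := by
  have hlt : 1 + l * t ≠ 0 := by positivity
  have h₁ : HasDerivAt (fun x : ℝ => 1 + l * x) l t := by
    simpa using ((hasDerivAt_id t).const_mul l).const_add 1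
  refine ((h₁.fun_pow m).mul (hasDerivAt_pow k t)).congr_deriv ?_
  rcases m with _ | m <;> rcases k with _ | k <;> simp <;> field_simp <;> ring

/-- The fundamental theorem of calculus for an integrand continuous on the positive half-line. -/
lemma hasDerivAt_integral_of_continuousOn_Ioi {f : ℝ → ℝ} (hf : ContinuousOn f (Ioi 0))
    {a t : ℝ} (ha : 0 < a) (ht : 0 < t) :
    HasDerivAt (fun u => ∫ x in a..u, f x) (f t) t :=
  intervalIntegral.integral_hasDerivAt_right
    ((hf.mono fun _ hx => (lt_min ha ht).trans_le hx.1).intervalIntegrable)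
    (hf.stronglyMeasurableAtFilter isOpen_Ioi t ht)
    (hf.continuousAt (Ioi_mem_nhds ht))

section Moments

variable {Q I₀ I₁ J K : ℝ → ℝ} {N m l a b : ℝ}

/-- A linear combination of the moments of `Q` over `[a, b]` is negative: its integrand is at most
the derivative in `y` of
`Q(y) (b - y) (1 + (b - y) Q'(b) / Q(b))`. -/
lemma moment_combination_neg (hN : 0 ≤ N) (hm : 0 ≤ m) (hl : 0 < l) (ha : 0 < a) (hab : a < b)
    (hQpos : ∀ t, 0 < t → 0 < Q t)
    (hQ : ∀ t, 0 < t → HasDerivAt Q (Q t * (N / t + m * l / (1 + l * t))) t)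
    (h₀ : ∀ t, 0 < t → HasDerivAt I₀ (Q t) t)
    (h₁ : ∀ t, 0 < t → HasDerivAt I₁ (t * Q t) t)
    (hJ : ∀ t, 0 < t → HasDerivAt J (Q t / t) t)
    (hK : ∀ t, 0 < t → HasDerivAt K (Q t / (1 + l * t)) t)
    (h₀a : I₀ a = 0) (h₁a : I₁ a = 0) (hJa : J a = 0) (hKa : K a = 0) :
    (N + 1) * N * (I₁ b / b + b * J b - 2 * I₀ b)
      + m * (m + 2 * N + 1) * ((I₀ b + l * I₁ b) / (1 + l * b) + (1 + l * b) * K b - 2 * I₀ b)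
      + (N / b + m * l / (1 + l * b)) * (I₁ b - b * I₀ b) - I₀ b < 0 := by
  have hb : 0 < b := ha.trans hab
  set β := N / b + m * l / (1 + l * b) with hβ
  have hβ0 : 0 ≤ β := by positivity
  let G : ℝ → ℝ := fun t =>
    (N + 1) * N * (I₁ t / b + b * J t - 2 * I₀ t)
      + m * (m + 2 * N + 1) * ((I₀ t + l * I₁ t) / (1 + l * b) + (1 + l * b) * K t - 2 * I₀ t)
      + β * (I₁ t - b * I₀ t) - I₀ t - Q t * ((b - t) * (1 + β * (b - t)))
  have hG : ∀ t, 0 < t → HasDerivAt G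
      (-(Q t * (b - t) ^ 2 * (m * N * (l / (b * (1 + l * t)) + l / (t * (1 + l * b))
        - 2 * l ^ 2 / ((1 + l * b) * (1 + l * t)))))) t := by
    intro t ht
    have hs : HasDerivAt (fun t => b - t) (-1) t := by
      simpa using (hasDerivAt_id t).const_sub b
    have h := (((((((h₁ t ht).div_const b).add ((hJ t ht).const_mul b)).sub
        ((h₀ t ht).const_mul 2)).const_mul ((N + 1) * N)).add
      ((((((h₀ t ht).add ((h₁ t ht).const_mul l)).div_const (1 + l * b)).add
        ((hK t ht).const_mul (1 + l * b))).sub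
        ((h₀ t ht).const_mul 2)).const_mul (m * (m + 2 * N + 1)))).add
      (((h₁ t ht).sub ((h₀ t ht).const_mul b)).const_mul β)).sub (h₀ t ht) |>.sub
      ((hQ t ht).mul (hs.mul ((hs.const_mul β).const_add 1)))
    refine h.congr_deriv ?_
    have hlt : 1 + l * t ≠ 0 := by positivity
    have hlb : 1 + l * b ≠ 0 := by positivity
    simp only [hβ, Pi.mul_apply]
    field_simp
    ring
  have hanti : AntitoneOn G (Icc a b) := by
    refine antitoneOn_of_deriv_nonpos (convex_Icc a b)
      (fun t ht => (hG t (ha.trans_le ht.1)).continuousAt.continuousWithinAt) ?_ ?_ <;>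
      rw [interior_Icc]
    · exact fun t ht => (hG t (ha.trans ht.1)).differentiableAt.differentiableWithinAt
    · intro t ht
      have ht0 : 0 < t := ha.trans ht.1
      rw [(hG t ht0).deriv, neg_nonpos]
      have hlt : 0 < 1 + l * t := by positivity
      have hlb : 0 < 1 + l * b := by positivity
      have hQt := hQpos t ht0
      have key : l / (b * (1 + l * t)) + l / (t * (1 + l * b))
          - 2 * l ^ 2 / ((1 + l * b) * (1 + l * t))
          = l * (t + b) / (b * t * (1 + l * t) * (1 + l * b)) := by
        field_simp
        ring
      rw [key]
      positivity
  have hle : G b ≤ G a := hanti (left_mem_Icc.2 hab.le) (right_mem_Icc.2 hab.le) hab.le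
  have hpos : 0 < Q a * ((b - a) * (1 + β * (b - a))) := by
    have := hQpos a ha
    have := sub_pos.2 hab
    positivity
  simp only [G, h₀a, h₁a, hJa, hKa] at hle
  norm_num at hle
  linarith

/-- The quadratic inequality between the moments of `Q` over `[a, b]`. -/
lemma moment_quadratic_neg (hN : 0 ≤ N) (hm : 0 ≤ m) (hl : 0 < l) (ha : 0 < a) (hab : a < b)
    (hQpos : ∀ t, 0 < t → 0 < Q t)
    (hQ : ∀ t, 0 < t → HasDerivAt Q (Q t * (N / t + m * l / (1 + l * t))) t)
    (h₀ : ∀ t, 0 < t → HasDerivAt I₀ (Q t) t)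
    (h₁ : ∀ t, 0 < t → HasDerivAt I₁ (t * Q t) t)
    (hJ : ∀ t, 0 < t → HasDerivAt J (Q t / t) t)
    (hK : ∀ t, 0 < t → HasDerivAt K (Q t / (1 + l * t)) t)
    (h₀a : I₀ a = 0) (h₁a : I₁ a = 0) (hJa : J a = 0) (hKa : K a = 0) :
    (N + 1) * N * (J b * I₁ b - I₀ b ^ 2)
      + m * (m + 2 * N + 1) * (K b * (I₀ b + l * I₁ b) - I₀ b ^ 2)
      + Q b * (I₁ b - b * I₀ b) < 0 := by
  let F : ℝ → ℝ := fun t =>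
    (N + 1) * N * (J t * I₁ t - I₀ t ^ 2)
      + m * (m + 2 * N + 1) * (K t * (I₀ t + l * I₁ t) - I₀ t ^ 2)
      + Q t * (I₁ t - t * I₀ t)
  have hF : ∀ t, 0 < t → HasDerivAt F
      (Q t * ((N + 1) * N * (I₁ t / t + t * J t - 2 * I₀ t)
      + m * (m + 2 * N + 1) * ((I₀ t + l * I₁ t) / (1 + l * t) + (1 + l * t) * K t - 2 * I₀ t)
      + (N / t + m * l / (1 + l * t)) * (I₁ t - t * I₀ t) - I₀ t)) t := by
    intro t ht
    have h := (((((hJ t ht).mul (h₁ t ht)).sub ((h₀ t ht).fun_pow 2)).const_mul ((N + 1) * N)).add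
      ((((hK t ht).mul ((h₀ t ht).add ((h₁ t ht).const_mul l))).sub
        ((h₀ t ht).fun_pow 2)).const_mul (m * (m + 2 * N + 1)))).add
      ((hQ t ht).mul ((h₁ t ht).sub ((hasDerivAt_id t).mul (h₀ t ht))))
    refine h.congr_deriv ?_
    have hlt : 1 + l * t ≠ 0 := by positivity
    simp only [Pi.mul_apply, Pi.add_apply, Pi.sub_apply, id]
    field_simp
    ring
  have hanti : StrictAntiOn F (Icc a b) := by
    refine strictAntiOn_of_deriv_neg (convex_Icc a b)
      (fun t ht => (hF t (ha.trans_le ht.1)).continuousAt.continuousWithinAt) ?_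
    rw [interior_Icc]
    intro t ht
    have ht0 : 0 < t := ha.trans ht.1
    rw [(hF t ht0).deriv]
    exact mul_neg_of_pos_of_neg (hQpos t ht0)
      (moment_combination_neg hN hm hl ha ht.1 hQpos hQ h₀ h₁ hJ hK h₀a h₁a hJa hKa)
  have hlt : F b < F a := hanti (left_mem_Icc.2 hab.le) (right_mem_Icc.2 hab.le) hab
  simpa [F, h₀a, h₁a, hJa, hKa] using hlt

end Moments

/-- For `λ > 0` and `0 < a < b`:
`n(n-1)·H₁(a,b) + L₁(a,b) < m(m+2n-1)·λ·H₂(a,b)`. -/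
theorem stmt_19 (m n : ℕ) (hm : 1 ≤ m) (hn : 2 ≤ n) (lam : ℝ) (hlam : 0 < lam)
    (a b : ℝ) (ha : 0 < a) (hab : a < b)
    (Q : ℝ → ℝ)
    (hQ : ∀ x : ℝ, Q x = (1 + lam * x) ^ m * x ^ (n - 1)) :
    (n : ℝ) * ((n : ℝ) - 1) *
        ((∫ x in a..b, Q x / x) * (∫ x in a..b, x * Q x)
          - (∫ x in a..b, Q x) ^ 2)
      + (Q b * (∫ x in a..b, x * Q x) - b * Q b * (∫ x in a..b, Q x))
    < (m : ℝ) * ((m : ℝ) + 2 * (n : ℝ) - 1) * lam *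
        (-(1 / lam) * (∫ x in a..b, Q x / (1 + lam * x))
            * (∫ x in a..b, (1 + lam * x) * Q x)
          + (1 / lam) * (∫ x in a..b, Q x) ^ 2) := by
  have hQc : Continuous Q := by
    rw [funext hQ]
    fun_prop
  have hden : ∀ x ∈ Ioi (0 : ℝ), 1 + lam * x ≠ 0 := fun x hx => by
    have : 0 < x := hx
    positivity
  have hsplit : ∫ x in a..b, (1 + lam * x) * Q x
      = (∫ x in a..b, Q x) + lam * ∫ x in a..b, x * Q x := by
    rw [← intervalIntegral.integral_const_mul, ← intervalIntegral.integral_add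
      (hQc.intervalIntegrable a b)
      ((by fun_prop : Continuous fun x => lam * (x * Q x)).intervalIntegrable a b)]
    exact intervalIntegral.integral_congr fun x _ => by ring
  have hmain := moment_quadratic_neg (Q := Q) (N := ((n - 1 : ℕ) : ℝ)) (m := m)
    (I₀ := fun t => ∫ x in a..t, Q x) (I₁ := fun t => ∫ x in a..t, x * Q x)
    (J := fun t => ∫ x in a..t, Q x / x) (K := fun t => ∫ x in a..t, Q x / (1 + lam * x))
    (Nat.cast_nonneg _) (Nat.cast_nonneg _) hlam ha hab
    (fun t ht => by rw [hQ]; positivity)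
    (fun t ht => by
      rw [funext hQ]
      exact hasDerivAt_affine_pow_mul_pow m (n - 1) hlam ht)
    (fun t ht => hasDerivAt_integral_of_continuousOn_Ioi hQc.continuousOn ha ht)
    (fun t ht => hasDerivAt_integral_of_continuousOn_Ioi
      (continuous_id.mul hQc).continuousOn ha ht)
    (fun t ht => hasDerivAt_integral_of_continuousOn_Ioi
      (hQc.continuousOn.div continuousOn_id fun x hx => ne_of_gt hx) ha ht)
    (fun t ht => hasDerivAt_integral_of_continuousOn_Ioi
      (hQc.continuousOn.div (by fun_prop) hden) ha ht)
    (by simp) (by simp) (by simp) (by simp)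
  rw [Nat.cast_sub (by lia), Nat.cast_one] at hmain
  rw [hsplit, ← sub_neg]
  refine lt_of_eq_of_lt ?_ hmain
  field_simp
  ring
end
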